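/- Fix δ ≥ 0, a symbol a of order 0, and the bump β, and set b = √2 sin((θ₁−θ₂+π)/2). For j ≥ 1 define H(r₁,r₂;θ₁−θ₂) = 2^{−j(3/2+δ)} β(r₁+r₂) ∫₀^∞ e^{i 2^j (r₁ r₂/(r₁+r₂)) s²} ψ_{3,m}(s) ds, where ψ_{3,m}(s) = (r₁+r₂)^{−3/2−δ} a(2^j(r₁+r₂)) · sin(θ₁−θ₂+π) / (s²/2 + 2 sin²((θ₁−θ₂+π)/2)). Let χ ∈ C_c^∞(ℝ) be an even bump function supported in [−ε, ε] with 0 < ε ≪ 1 sufficiently small. Then there is a constant C, independent of j, such that for all j ≥ 1 and all f ∈ L²(ℝ²), ‖ ∫₀^∞ ∫₀^{2π} χ(b) H(r₁,r₂;θ₁−θ₂) f(r₂,θ₂) dθ₂ r₂ dr₂ ‖_{L²(ℝ²)} ≤ C 2^{−j(3/2+δ)} 2^{−j/2} ‖f‖_{L²(ℝ²)}. -/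

import Mathlib

open MeasureTheory Real Set

noncomputable section

/-- A symbol of order `0` on `(0, ∞)`. -/
def IsSymbol0 (a : ℝ → ℂ) : Prop :=
  ContDiffOn ℝ (⊤ : ℕ∞) a (Set.Ioi 0) ∧ (∃ M : ℝ, ∀ r > (0 : ℝ), ‖a r‖ ≤ M) ∧
    ∀ N : ℕ, ∃ C : ℝ, ∀ r > (0 : ℝ),
      ‖iteratedDerivWithin N a (Set.Ioi 0) r‖ ≤ C * r ^ (-(N : ℝ))

/-- `ψ_{3,m}(s)`, with `φ = θ₁ - θ₂`. -/
def psi3m (δ : ℝ) (a : ℝ → ℂ) (j : ℕ) (r₁ r₂ φ s : ℝ) : ℂ :=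
  (((r₁ + r₂) ^ (-(3 / 2 + δ)) : ℝ) : ℂ) * a ((2 : ℝ) ^ (j : ℝ) * (r₁ + r₂)) *
    ((Real.sin (φ + Real.pi) /
        (s ^ 2 / 2 + 2 * Real.sin ((φ + Real.pi) / 2) ^ 2) : ℝ) : ℂ)

/-- The kernel `H` with quadratic phase. -/
def Hker (δ : ℝ) (a : ℝ → ℂ) (β : ℝ → ℝ) (j : ℕ) (r₁ r₂ φ : ℝ) : ℂ :=
  (((2 : ℝ) ^ (-(j : ℝ) * (3 / 2 + δ)) : ℝ) : ℂ) * ((β (r₁ + r₂) : ℝ) : ℂ) *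
    ∫ s in Set.Ioi (0 : ℝ),
      Complex.exp (Complex.I *
        (((2 : ℝ) ^ (j : ℝ) * (r₁ * r₂ / (r₁ + r₂)) * s ^ 2 : ℝ) : ℂ)) *
        psi3m δ a j r₁ r₂ φ s

/-- `b = √2 sin((θ₁ - θ₂ + π)/2)`, as a function of `φ = θ₁ - θ₂`. -/
def bb (φ : ℝ) : ℝ := Real.sqrt 2 * Real.sin ((φ + Real.pi) / 2)

open scoped ENNReal NNReal

/-- The `L^p(ℝ²)` norm of a function written in polar coordinates. -/
def polarLp (p : ℝ) (g : ℝ → ℝ → ℂ) : ℝ≥0∞ :=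
  (∫⁻ r in Set.Ioi (0 : ℝ),
      (∫⁻ θ in Set.Ico (0 : ℝ) (2 * Real.pi), (‖g r θ‖₊ : ℝ≥0∞) ^ p) *
        ENNReal.ofReal r) ^ (1 / p)

/-- The operator with kernel `χ(b) H`. -/
def TH (δ : ℝ) (a : ℝ → ℂ) (β χ : ℝ → ℝ) (j : ℕ) (f : ℝ → ℝ → ℂ) (r₁ θ₁ : ℝ) : ℂ :=
  ∫ r₂ in Set.Ioi (0 : ℝ),
    (∫ θ₂ in Set.Ico (0 : ℝ) (2 * Real.pi),
      ((χ (bb (θ₁ - θ₂)) : ℝ) : ℂ) * Hker δ a β j r₁ r₂ (θ₁ - θ₂) * f r₂ θ₂) * (r₂ : ℂ)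

/-! By `Hker_eq_amplitude_mul_oscKernel`, `H` is a radial amplitude times a superposition of
conjugate Poisson kernels, centred at `π`, against the phase `λ s²`, `λ = 2^j r₁ r₂ / (r₁ + r₂)`.
Near `b = 0` the superposition has no uniform pointwise decay in `λ`, but its Fourier coefficients
are oscillatory integrals of powers of the Poisson radius, which decreases in `s`. Van der Corput's
estimate bounds all of them by a multiple of `λ^{-1/2}`, so convolution with the superposition has
norm `O(λ^{-1/2})` on `L²` of the circle. Where `b` is bounded below the superposition itself is
`O(λ^{-1/2})`, so the cutoff `χ(b)` costs only a convolution with a small bounded kernel.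
Cauchy–Schwarz in `r₂` then leaves the weight `λ^{-1} r₁ r₂ = 2^{-j} (r₁ + r₂)` on a bounded range
of radii, which gives the factor `2^{-j/2}`.

The functions `f` are arbitrary and the integrals defining `TH` vanish where their integrands are
not integrable, so Tonelli's theorem is not available to exchange the angular and radial integrals.
Angular continuity of the majorants replaces joint measurability. -/

section

open Filter Topology

/-! ### Van der Corput's estimate for a quadratic phase -/

lemma norm_integral_Ioi_mul_deriv_le {c M : ℝ} {q q' : ℝ → ℝ} {e e' : ℝ → ℂ}
    (hq : ∀ s ∈ Ici c, HasDerivAt q (q' s) s) (hq' : ∀ s ∈ Ioi c, q' s ≤ 0)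
    (hlim : Tendsto q atTop (𝓝 0)) (he : ∀ s, HasDerivAt e (e' s) s) (hM : ∀ s, ‖e s‖ ≤ M)
    (hint : IntegrableOn (fun s => (q s : ℂ) * e' s) (Ioi c)) :
    ‖∫ s in Ioi c, (q s : ℂ) * e' s‖ ≤ 2 * M * q c := by
  have hecont : Continuous e := continuous_iff_continuousAt.2 fun s => (he s).continuousAt
  have hq'_int : IntegrableOn q' (Ioi c) := integrableOn_Ioi_deriv_of_nonpos' hq hq' hlim
  have hq'_integral : ∫ s in Ioi c, -q' s = q c := by
    rw [integral_neg, integral_Ioi_of_hasDerivAt_of_nonpos' hq hq' hlim]; ring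
  have hqc : 0 ≤ q c := hq'_integral ▸
    setIntegral_nonneg measurableSet_Ioi fun s hs => neg_nonneg.2 (hq' s hs)
  have hbd : Tendsto (fun s => (q s : ℂ) * e s) (𝓝[>] c) (𝓝 (q c * e c)) :=
    (((hq c self_mem_Ici).ofReal_comp.continuousAt).mul
      hecont.continuousAt).tendsto.mono_left nhdsWithin_le_nhds
  have hinf : Tendsto (fun s => (q s : ℂ) * e s) atTop (𝓝 0) := by
    have hq0 : Tendsto (fun s => (q s : ℂ)) atTop (𝓝 0) := by exact_mod_cast hlim.ofReal
    exact hq0.zero_mul_isBoundedUnder_le (isBoundedUnder_of ⟨M, hM⟩)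
  have hparts : ∫ s in Ioi c, (q s : ℂ) * e' s = 0 - q c * e c - ∫ s in Ioi c, (q' s : ℂ) * e s :=
    integral_Ioi_mul_deriv_eq_deriv_mul
      (fun s hs => (hq s (Ioi_subset_Ici_self hs)).ofReal_comp) (fun s _ => he s) hint
      (hq'_int.ofReal.mul_bdd hecont.aestronglyMeasurable (Eventually.of_forall hM)) hbd hinf
  have hrem : ‖∫ s in Ioi c, (q' s : ℂ) * e s‖ ≤ M * q c := by
    rw [← hq'_integral, ← integral_const_mul]
    refine norm_integral_le_of_norm_le (hq'_int.neg.const_mul M) ?_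
    filter_upwards [ae_restrict_mem measurableSet_Ioi] with s hs
    rw [norm_mul, Complex.norm_real, norm_of_nonpos (hq' s hs), mul_comm]
    exact mul_le_mul_of_nonneg_right (hM s) (neg_nonneg.2 (hq' s hs))
  calc ‖∫ s in Ioi c, (q s : ℂ) * e' s‖
      ≤ ‖(q c : ℂ) * e c‖ + ‖∫ s in Ioi c, (q' s : ℂ) * e s‖ := by
        rw [hparts, zero_sub, ← norm_neg (_ * _)]; exact norm_sub_le _ _
    _ ≤ q c * M + M * q c := by
        rw [norm_mul, Complex.norm_real, norm_of_nonneg hqc]; gcongr; exact hM c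
    _ = 2 * M * q c := by ring

lemma norm_exp_I_mul_ofReal_mul (x : ℝ) (z : ℂ) :
    ‖Complex.exp (Complex.I * (x : ℂ)) * z‖ = ‖z‖ := by
  rw [norm_mul, Complex.norm_exp_I_mul_ofReal, one_mul]

lemma integrableOn_exp_I_mul_sq_mul {lam : ℝ} {s : Set ℝ} {w : ℝ → ℝ} (hw : IntegrableOn w s) :
    IntegrableOn (fun s => Complex.exp (Complex.I * ((lam * s ^ 2 : ℝ) : ℂ)) * (w s : ℂ)) s :=
  hw.ofReal.bdd_mul (c := 1) (Continuous.aestronglyMeasurable (by fun_prop))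
    (Eventually.of_forall fun s => (Complex.norm_exp_I_mul_ofReal _).le)

section

variable {lam W : ℝ} {w w' : ℝ → ℝ}

lemma norm_integral_Ioi_exp_I_mul_sq_mul_le_div {c : ℝ} (hc : 0 < c) (hlam : 0 < lam)
    (hw : ∀ s > 0, HasDerivAt w (w' s) s) (hw' : ∀ s > 0, w' s ≤ 0)
    (h0 : ∀ s > 0, 0 ≤ w s) (hW : ∀ s > 0, w s ≤ W) (hint : IntegrableOn w (Ioi 0)) :
    ‖∫ s in Ioi c, Complex.exp (Complex.I * ((lam * s ^ 2 : ℝ) : ℂ)) * (w s : ℂ)‖ ≤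
      W / (lam * c) := by
  set e : ℝ → ℂ := fun s => Complex.exp (Complex.I * ((lam * s ^ 2 : ℝ) : ℂ)) with he
  set q : ℝ → ℝ := fun s => w s / s with hq
  have hq_deriv : ∀ s ∈ Ici c, HasDerivAt q ((w' s * s - w s * 1) / s ^ 2) s := fun s hs =>
    (hw s (hc.trans_le hs)).div (hasDerivAt_id s) (hc.trans_le hs).ne'
  have hq_anti : ∀ s ∈ Ioi c, (w' s * s - w s * 1) / s ^ 2 ≤ 0 := fun s hs => by
    have hs0 : 0 < s := hc.trans hs
    exact div_nonpos_of_nonpos_of_nonneg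
      (by nlinarith [h0 s hs0, mul_nonneg (neg_nonneg.2 (hw' s hs0)) hs0.le]) (sq_nonneg s)
  have hq_lim : Tendsto q atTop (𝓝 0) := by
    refine squeeze_zero' ?_ ?_ (tendsto_const_nhds.div_atTop tendsto_id : Tendsto (W / ·) _ _)
    · filter_upwards [eventually_gt_atTop 0] with s hs using div_nonneg (h0 s hs) hs.le
    · filter_upwards [eventually_gt_atTop 0] with s hs
      exact div_le_div_of_nonneg_right (hW s hs) hs.le
  have he_deriv (s : ℝ) : HasDerivAt (fun s => (2 * Complex.I * lam)⁻¹ * e s) (s * e s) s := by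
    have hphase : HasDerivAt (fun s : ℝ => lam * s ^ 2) (lam * (2 * s)) s := by
      simpa using (hasDerivAt_pow 2 s).const_mul lam
    refine ((hphase.ofReal_comp.const_mul Complex.I).cexp.const_mul _).congr_deriv ?_
    have : (lam : ℂ) ≠ 0 := Complex.ofReal_ne_zero.2 hlam.ne'
    simp only [he]; push_cast; field_simp
  have he_norm (s : ℝ) : ‖(2 * Complex.I * lam)⁻¹ * e s‖ ≤ (2 * lam)⁻¹ := by
    rw [mul_comm, he, norm_mul, Complex.norm_exp_I_mul_ofReal, one_mul]
    simp [abs_of_pos hlam]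
  have hcongr : EqOn (fun s => e s * (w s : ℂ)) (fun s => (q s : ℂ) * (s * e s)) (Ioi c) :=
    fun s hs => by
      have : (s : ℂ) ≠ 0 := Complex.ofReal_ne_zero.2 (hc.trans hs).ne'
      simp only [hq]; push_cast; field_simp
  have hint' := (integrableOn_exp_I_mul_sq_mul (lam := lam)
    (hint.mono_set (Ioi_subset_Ioi hc.le))).congr_fun hcongr measurableSet_Ioi
  rw [setIntegral_congr_fun measurableSet_Ioi hcongr]
  calc _ ≤ 2 * (2 * lam)⁻¹ * q c :=
        norm_integral_Ioi_mul_deriv_le hq_deriv hq_anti hq_lim he_deriv he_norm hint'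
    _ = w c / (lam * c) := by simp only [hq]; field_simp
    _ ≤ W / (lam * c) := by gcongr; exact hW c hc

lemma norm_integral_Ioi_exp_I_mul_sq_mul_le (hlam : 0 < lam)
    (hw : ∀ s > 0, HasDerivAt w (w' s) s) (hw' : ∀ s > 0, w' s ≤ 0)
    (h0 : ∀ s > 0, 0 ≤ w s) (hW : ∀ s > 0, w s ≤ W) (hint : IntegrableOn w (Ioi 0)) :
    ‖∫ s in Ioi (0 : ℝ), Complex.exp (Complex.I * ((lam * s ^ 2 : ℝ) : ℂ)) * (w s : ℂ)‖ ≤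
      2 * W / √lam := by
  have : 0 < √lam := Real.sqrt_pos.2 hlam
  -- The two pieces balance at `s = λ^{-1/2}`.
  set c : ℝ := 1 / √lam with hc
  have hc_pos : 0 < c := by positivity
  have hnear : ‖∫ s in Ioc 0 c, Complex.exp (Complex.I * ((lam * s ^ 2 : ℝ) : ℂ)) * (w s : ℂ)‖ ≤
      W * c := by
    refine (norm_setIntegral_le_of_norm_le_const (C := W) (by simp) fun s hs => ?_).trans_eq
      (by simp [Measure.real, hc_pos.le])
    rw [norm_exp_I_mul_ofReal_mul, Complex.norm_real, norm_of_nonneg (h0 s hs.1)]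
    exact hW s hs.1
  have hfar := norm_integral_Ioi_exp_I_mul_sq_mul_le_div hc_pos hlam hw hw' h0 hW hint
  have hint' := integrableOn_exp_I_mul_sq_mul (lam := lam) hint
  rw [← Ioc_union_Ioi_eq_Ioi hc_pos.le, setIntegral_union (Ioc_disjoint_Ioi le_rfl)
    measurableSet_Ioi (hint'.mono_set Ioc_subset_Ioi_self)
    (hint'.mono_set (Ioi_subset_Ioi hc_pos.le))]
  calc _ ≤ W * c + W / (lam * c) := (norm_add_le _ _).trans (add_le_add hnear hfar)
    _ = W / √lam + W / √lam := by
        rw [show lam * c = √lam by rw [hc, mul_one_div, Real.div_sqrt], hc, mul_one_div]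
    _ = 2 * W / √lam := by ring

end

/-! ### The conjugate Poisson kernel and its oscillatory superposition -/

lemma bb_sq (φ : ℝ) : bb φ ^ 2 = 1 + cos φ := by
  have h : sin ((φ + π) / 2) = cos (φ / 2) := by rw [add_div, sin_add_pi_div_two]
  rw [bb, h, mul_pow, sq_sqrt zero_le_two, cos_sq]; ring_nf

lemma continuous_bb : Continuous bb := by unfold bb; fun_prop

lemma bb_mem_Icc (φ : ℝ) : bb φ ∈ Icc (-√2) √2 := by
  refine abs_le.1 ?_
  rw [bb, abs_mul, abs_of_nonneg (sqrt_nonneg 2)]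
  exact mul_le_of_le_one_right (sqrt_nonneg 2) (abs_sin_le_one _)

lemma bb_add_two_pi (φ : ℝ) : bb (φ + 2 * π) = -bb φ := by
  rw [bb, bb, show (φ + 2 * π + π) / 2 = (φ + π) / 2 + π by ring, sin_add_pi, mul_neg]

lemma abs_sin_le_sqrt_two_mul_abs_bb (φ : ℝ) : |sin φ| ≤ √2 * |bb φ| := by
  refine abs_le_of_sq_le_sq ?_ (by positivity)
  rw [mul_pow, sq_sqrt zero_le_two, sq_abs, bb_sq, sin_sq]
  nlinarith [neg_one_le_cos φ, cos_le_one φ]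

lemma sin_eq_zero_of_bb_eq_zero {φ : ℝ} (h : bb φ = 0) : sin φ = 0 := by
  simpa [h] using abs_sin_le_sqrt_two_mul_abs_bb φ

lemma ae_bb_ne_zero : ∀ᵐ φ, bb φ ≠ 0 := by
  have hzeros : {φ | bb φ = 0} ⊆ range fun n : ℤ => 2 * (n * π) - π := by
    rintro φ (hφ : bb φ = 0)
    have hsin : sin ((φ + π) / 2) = 0 := by simpa [bb] using hφ
    obtain ⟨n, hn⟩ := sin_eq_zero_iff.1 hsin
    exact ⟨n, by linarith⟩
  simpa [ae_iff] using ((countable_range _).mono hzeros).measure_zero volume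

/-- Up to the factor `(r₁ + r₂)^(-3/2-δ) a(2^j (r₁ + r₂))`, the density `ψ_{3,m}`, written in terms
of `φ = θ₁ - θ₂`. As a function of `φ` it is a conjugate Poisson kernel centred at `π`, with
`poissonRadius s` as its radius. -/
def conjPoisson (φ s : ℝ) : ℝ := -sin φ / (s ^ 2 / 2 + bb φ ^ 2)

/-- The angular factor of `H`: the superposition of conjugate Poisson kernels against the quadratic
phase `λ s²`. -/
def oscKernel (lam φ : ℝ) : ℂ :=
  ∫ s in Ioi (0 : ℝ), Complex.exp (Complex.I * ((lam * s ^ 2 : ℝ) : ℂ)) * (conjPoisson φ s : ℂ)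

section CauchyDensity

variable {b : ℝ}

lemma inv_sq_half_add_sq_eq (hb : 0 < b) (s : ℝ) :
    (s ^ 2 / 2 + b ^ 2)⁻¹ = (b ^ 2)⁻¹ * (1 + ((√2 * b)⁻¹ * s) ^ 2)⁻¹ := by
  rw [← mul_inv, mul_pow, inv_pow, mul_pow, sq_sqrt zero_le_two]
  congr 1; field_simp; ring

lemma integrable_inv_sq_half_add_sq (hb : 0 < b) :
    Integrable fun s : ℝ => (s ^ 2 / 2 + b ^ 2)⁻¹ := by
  simp_rw [inv_sq_half_add_sq_eq hb]
  exact (integrable_inv_one_add_sq.comp_mul_left' (by positivity)).const_mul _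

lemma integral_Ioi_inv_sq_half_add_sq (hb : 0 < b) :
    ∫ s in Ioi (0 : ℝ), (s ^ 2 / 2 + b ^ 2)⁻¹ = π / (√2 * b) := by
  simp_rw [inv_sq_half_add_sq_eq hb]
  rw [integral_const_mul,
    integral_comp_mul_left_Ioi (fun x : ℝ => (1 + x ^ 2)⁻¹) 0 (b := (√2 * b)⁻¹) (by positivity)]
  have h2 : √2 * √2 = 2 := mul_self_sqrt zero_le_two
  simp only [mul_zero, integral_Ioi_inv_one_add_sq, arctan_zero, sub_zero, smul_eq_mul, inv_inv]
  field_simp; linarith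

lemma hasDerivAt_inv_sq_half_add_sq (hb : 0 < b) (s : ℝ) :
    HasDerivAt (fun s : ℝ => (s ^ 2 / 2 + b ^ 2)⁻¹) (-s / (s ^ 2 / 2 + b ^ 2) ^ 2) s := by
  have hden : HasDerivAt (fun s : ℝ => s ^ 2 / 2 + b ^ 2) s s :=
    (((hasDerivAt_pow 2 s).div_const 2).add_const (b ^ 2)).congr_deriv (by norm_num)
  exact hden.inv (by positivity)

end CauchyDensity

lemma conjPoisson_of_bb_eq_zero {φ : ℝ} (h : bb φ = 0) (s : ℝ) : conjPoisson φ s = 0 := by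
  rw [conjPoisson, sin_eq_zero_of_bb_eq_zero h, neg_zero, zero_div]

lemma conjPoisson_eq_mul (φ s : ℝ) :
    conjPoisson φ s = -sin φ * (s ^ 2 / 2 + |bb φ| ^ 2)⁻¹ := by
  rw [conjPoisson, sq_abs, div_eq_mul_inv]

lemma integrable_conjPoisson (φ : ℝ) : Integrable (conjPoisson φ) := by
  rcases eq_or_ne (bb φ) 0 with h | h
  · exact (integrable_zero ℝ ℝ volume).congr
      (.of_forall fun s => (conjPoisson_of_bb_eq_zero h s).symm)
  · exact ((integrable_inv_sq_half_add_sq (abs_pos.2 h)).const_mul (-sin φ)).congr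
      (.of_forall fun s => (conjPoisson_eq_mul φ s).symm)

lemma integral_Ioi_abs_conjPoisson_le (φ : ℝ) : ∫ s in Ioi (0 : ℝ), |conjPoisson φ s| ≤ π := by
  rcases eq_or_ne (bb φ) 0 with h | h
  · simp [conjPoisson_of_bb_eq_zero h, pi_pos.le]
  · have hb : 0 < |bb φ| := abs_pos.2 h
    have habs (s : ℝ) : |conjPoisson φ s| = |sin φ| * (s ^ 2 / 2 + |bb φ| ^ 2)⁻¹ := by
      rw [conjPoisson_eq_mul, abs_mul, abs_neg]
      exact congrArg _ (abs_of_nonneg (by positivity))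
    simp_rw [habs]
    rw [integral_const_mul, integral_Ioi_inv_sq_half_add_sq hb]
    calc |sin φ| * (π / (√2 * |bb φ|)) ≤ √2 * |bb φ| * (π / (√2 * |bb φ|)) := by
          gcongr; exact abs_sin_le_sqrt_two_mul_abs_bb φ
      _ = π := by field_simp

lemma norm_oscKernel_le (lam φ : ℝ) : ‖oscKernel lam φ‖ ≤ π := by
  refine (norm_integral_le_integral_norm _).trans ?_
  simp_rw [norm_exp_I_mul_ofReal_mul, Complex.norm_real, Real.norm_eq_abs]
  exact integral_Ioi_abs_conjPoisson_le φ

lemma oscKernel_of_bb_eq_zero (lam : ℝ) {φ : ℝ} (h : bb φ = 0) : oscKernel lam φ = 0 := by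
  simp [oscKernel, conjPoisson_of_bb_eq_zero h]

lemma norm_oscKernel_le_div_sqrt {lam φ : ℝ} (hlam : 0 < lam) (h : bb φ ≠ 0) :
    ‖oscKernel lam φ‖ ≤ 2 / bb φ ^ 2 / √lam := by
  have hb : 0 < |bb φ| := abs_pos.2 h
  have hfactor : oscKernel lam φ = (-sin φ : ℝ) * ∫ s in Ioi (0 : ℝ),
      Complex.exp (Complex.I * ((lam * s ^ 2 : ℝ) : ℂ)) *
        (((s ^ 2 / 2 + |bb φ| ^ 2)⁻¹ : ℝ) : ℂ) := by
    rw [oscKernel, ← integral_const_mul]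
    refine integral_congr_ae (.of_forall fun s => ?_)
    simp only [conjPoisson_eq_mul φ s]; push_cast; ring
  have hvdc := norm_integral_Ioi_exp_I_mul_sq_mul_le (W := (|bb φ| ^ 2)⁻¹) hlam
    (fun s _ => hasDerivAt_inv_sq_half_add_sq hb s)
    (fun s hs => div_nonpos_of_nonpos_of_nonneg (neg_nonpos.2 hs.le) (sq_nonneg _))
    (fun s _ => by positivity) (fun s _ => by gcongr; linarith [sq_nonneg s])
    (integrable_inv_sq_half_add_sq hb).integrableOn
  calc ‖oscKernel lam φ‖ ≤ 1 * (2 * (|bb φ| ^ 2)⁻¹ / √lam) := by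
        rw [hfactor, norm_mul, Complex.norm_real, norm_neg]
        gcongr
        exact abs_sin_le_one φ
    _ = 2 / bb φ ^ 2 / √lam := by rw [sq_abs, one_mul, ← div_eq_mul_inv]

lemma measurable_uncurry_conjPoisson : Measurable (Function.uncurry conjPoisson) := by
  have := continuous_bb.measurable
  unfold conjPoisson Function.uncurry; fun_prop

lemma measurable_uncurry_exp_mul_conjPoisson (lam : ℝ) :
    Measurable (Function.uncurry fun φ s : ℝ =>
      Complex.exp (Complex.I * ((lam * s ^ 2 : ℝ) : ℂ)) * (conjPoisson φ s : ℂ)) := by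
  have hphase : Measurable fun p : ℝ × ℝ =>
      Complex.exp (Complex.I * ((lam * p.2 ^ 2 : ℝ) : ℂ)) := by fun_prop
  exact hphase.mul measurable_uncurry_conjPoisson.complex_ofReal

lemma measurable_oscKernel (lam : ℝ) : Measurable (oscKernel lam) :=
  ((measurable_uncurry_exp_mul_conjPoisson lam).stronglyMeasurable.integral_prod_right
    (ν := volume.restrict (Ioi 0))).measurable

lemma periodic_conjPoisson (s : ℝ) : Function.Periodic (conjPoisson · s) (2 * π) := fun φ => by
  simp only [conjPoisson, bb_add_two_pi, neg_sq, sin_add_two_pi]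

lemma periodic_oscKernel (lam : ℝ) : Function.Periodic (oscKernel lam) (2 * π) := fun φ => by
  simp only [oscKernel, periodic_conjPoisson _ φ]

lemma continuousAt_oscKernel (lam : ℝ) {φ : ℝ} (h : bb φ ≠ 0) :
    ContinuousAt (oscKernel lam) φ := by
  have hd : 0 < |bb φ| / 2 := by have := abs_pos.2 h; positivity
  have hnear : ∀ᶠ x in 𝓝 φ, |bb φ| / 2 < |bb x| :=
    continuous_bb.abs.continuousAt.eventually_const_lt (half_lt_self (abs_pos.2 h))
  refine continuousAt_of_dominated (bound := fun s => (s ^ 2 / 2 + (|bb φ| / 2) ^ 2)⁻¹)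
    (.of_forall fun x => ?_) ?_ (integrable_inv_sq_half_add_sq hd).integrableOn
    (.of_forall fun s => ?_)
  · exact (integrableOn_exp_I_mul_sq_mul (integrable_conjPoisson x).integrableOn).1
  · filter_upwards [hnear] with x hx
    refine .of_forall fun s => ?_
    rw [norm_exp_I_mul_ofReal_mul, Complex.norm_real, conjPoisson_eq_mul, norm_mul, norm_neg,
      norm_inv, norm_of_nonneg (by positivity : 0 ≤ s ^ 2 / 2 + |bb x| ^ 2)]
    refine (mul_le_of_le_one_left (by positivity) (abs_sin_le_one x)).trans ?_
    gcongr
  · have hcont : ContinuousAt (conjPoisson · s) φ :=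
      continuous_sin.continuousAt.neg.div (continuous_bb.continuousAt.pow 2 |>.const_add _)
        (by positivity)
    exact continuousAt_const.mul (Complex.continuous_ofReal.continuousAt.comp hcont)

/-! ### Fourier coefficients of the oscillatory kernel -/

/-- Lebesgue measure on the fundamental domain `[0, 2π)`, the measure `dθ` of polar coordinates. -/
abbrev circleMeasure : Measure ℝ := volume.restrict (Ico 0 (2 * π))

lemma circleMeasure_eq_restrict_Ioc : circleMeasure = volume.restrict (Ioc 0 (2 * π)) :=
  Measure.restrict_congr_set Ico_ae_eq_Ioc

lemma circleMeasure_univ : circleMeasure univ = ENNReal.ofReal (2 * π) := by simp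

lemma fourierCoeffOn_two_pi_eq (f : ℝ → ℂ) (m : ℤ) :
    fourierCoeffOn two_pi_pos f m =
      (2 * π : ℂ)⁻¹ * ∫ x, Complex.exp (-(m * x * Complex.I)) * f x ∂circleMeasure := by
  rw [fourierCoeffOn_eq_integral, intervalIntegral.integral_of_le two_pi_pos.le, sub_zero,
    Complex.real_smul, circleMeasure_eq_restrict_Ioc]
  push_cast
  rw [one_div]
  congr 1
  refine integral_congr_ae (.of_forall fun x => ?_)
  simp only [smul_eq_mul, fourier_coe_apply]
  congr 2
  push_cast
  field_simp

lemma integral_exp_int_mul_I (n : ℤ) :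
    ∫ x : ℝ, Complex.exp (n * x * Complex.I) ∂circleMeasure =
      if n = 0 then 2 * (π : ℂ) else 0 := by
  rw [circleMeasure_eq_restrict_Ioc, ← intervalIntegral.integral_of_le two_pi_pos.le]
  split_ifs with hn
  · simp [hn]
  · have hc : (n : ℂ) * Complex.I ≠ 0 := mul_ne_zero (Int.cast_ne_zero.2 hn) Complex.I_ne_zero
    have hper : Complex.exp (n * Complex.I * ((2 * π : ℝ) : ℂ)) = 1 :=
      Complex.exp_eq_one_iff.2 ⟨n, by push_cast; ring⟩
    simp_rw [mul_right_comm _ _ Complex.I]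
    rw [integral_exp_mul_complex hc, hper]
    simp

lemma norm_exp_neg_int_mul_I (m : ℤ) (x : ℝ) :
    ‖Complex.exp (-(m * x * Complex.I))‖ = 1 := by
  rw [Complex.norm_exp]; simp

lemma fourierCoeffOn_eq_of_hasSum {c : ℤ → ℂ} (hc : Summable fun n => ‖c n‖) {f : ℝ → ℂ}
    (hf : ∀ x : ℝ, HasSum (fun n : ℤ => c n * Complex.exp (n * x * Complex.I)) (f x)) (m : ℤ) :
    fourierCoeffOn two_pi_pos f m = c m := by
  have hterm (n : ℤ) (x : ℝ) :
      Complex.exp (-(m * x * Complex.I)) * (c n * Complex.exp (n * x * Complex.I)) =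
        c n * Complex.exp ((n - m : ℤ) * x * Complex.I) := by
    rw [mul_left_comm, ← Complex.exp_add]; congr 2; push_cast; ring
  have hsum := hasSum_integral_of_dominated_convergence (μ := circleMeasure)
    (F := fun (n : ℤ) (x : ℝ) =>
      Complex.exp (-(m * x * Complex.I)) * (c n * Complex.exp (n * x * Complex.I)))
    (fun n _ => ‖c n‖) (fun n => Continuous.aestronglyMeasurable (by fun_prop))
    (fun n => .of_forall fun x => by simp [Complex.norm_exp])
    (.of_forall fun _ => hc) (integrable_const _) (.of_forall fun x => (hf x).mul_left _)
  have horth (n : ℤ) (hn : n ≠ m) : ∫ x : ℝ, Complex.exp (-(m * x * Complex.I)) *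
      (c n * Complex.exp (n * x * Complex.I)) ∂circleMeasure = 0 := by
    simp_rw [hterm]
    rw [integral_const_mul, integral_exp_int_mul_I, if_neg (sub_ne_zero.2 hn), mul_zero]
  rw [fourierCoeffOn_two_pi_eq, hsum.unique (hasSum_single m horth)]
  simp_rw [hterm]
  rw [integral_const_mul, integral_exp_int_mul_I, sub_self, if_pos rfl]
  field_simp

lemma summable_geometric_natAbs {ρ : ℝ} (hρ : |ρ| < 1) : Summable fun n : ℤ => |ρ| ^ n.natAbs :=
  Summable.of_nat_of_neg (by simpa using summable_geometric_of_lt_one (abs_nonneg ρ) hρ)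
    (by simpa using summable_geometric_of_lt_one (abs_nonneg ρ) hρ)

lemma conjPoisson_sum_eq (ρ φ : ℝ) {w w' : ℂ} (hw : w = ρ * Complex.exp (φ * Complex.I))
    (hw' : w' = ρ * Complex.exp (-(φ * Complex.I))) (h : 1 - w ≠ 0) (h' : 1 - w' ≠ 0) :
    ((2 * ρ * sin φ / (1 - 2 * ρ * cos φ + ρ ^ 2) : ℝ) : ℂ) =
      -Complex.I * (w * (1 - w)⁻¹) + Complex.I * (w' * (1 - w')⁻¹) := by
  have hexp : Complex.exp (φ * Complex.I) * Complex.exp (-(φ * Complex.I)) = 1 := by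
    rw [← Complex.exp_add, add_neg_cancel, Complex.exp_zero]
  have hsin : 2 * ρ * Complex.sin φ = -Complex.I * (w - w') := by
    rw [Complex.sin, hw, hw', neg_mul]; ring
  have hcos : 2 * ρ * Complex.cos φ = w + w' := by rw [Complex.cos, hw, hw', neg_mul]; ring
  have hden : 1 - 2 * ρ * Complex.cos φ + ρ ^ 2 = (1 - w) * (1 - w') := by
    rw [hcos, hw, hw']; linear_combination (-(ρ : ℂ) ^ 2) * hexp
  push_cast
  rw [hden, hsin]
  field_simp
  ring

lemma hasSum_conjPoisson {ρ : ℝ} (hρ : |ρ| < 1) (φ : ℝ) :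
    HasSum (fun n : ℤ => -Complex.I * n.sign * ρ ^ n.natAbs * Complex.exp (n * φ * Complex.I))
      ((2 * ρ * sin φ / (1 - 2 * ρ * cos φ + ρ ^ 2) : ℝ) : ℂ) := by
  set w : ℂ := ρ * Complex.exp (φ * Complex.I) with hw
  set w' : ℂ := ρ * Complex.exp (-(φ * Complex.I)) with hw'
  have hw_lt : ‖w‖ < 1 := by simpa [hw, Complex.norm_exp] using hρ
  have hw'_lt : ‖w'‖ < 1 := by simpa [hw', Complex.norm_exp] using hρ
  have hpos := (((hasSum_geometric_of_norm_lt_one hw_lt).mul_left w).mul_left (-Complex.I))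
  have hneg := (((hasSum_geometric_of_norm_lt_one hw'_lt).mul_left w').mul_left Complex.I)
  have hne {z : ℂ} (hz : ‖z‖ < 1) : 1 - z ≠ 0 := fun h0 => by
    rw [← sub_eq_zero.1 h0, norm_one] at hz; exact lt_irrefl _ hz
  have h := HasSum.of_add_one_of_neg_add_one
    (f := fun n : ℤ => -Complex.I * n.sign * ρ ^ n.natAbs * Complex.exp (n * φ * Complex.I))
    (hpos.congr_fun fun n => ?_) (hneg.congr_fun fun n => ?_)
  · rw [conjPoisson_sum_eq ρ φ hw hw' (hne hw_lt) (hne hw'_lt)]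
    simpa using h
  · rw [← pow_succ', hw, mul_pow, ← Complex.exp_nat_mul, Int.sign_eq_one_of_pos (by omega),
      show ((n : ℤ) + 1).natAbs = n + 1 by omega]
    push_cast; ring_nf
  · rw [← pow_succ', hw', mul_pow, ← Complex.exp_nat_mul, Int.sign_eq_neg_one_of_neg (by omega),
      show (-((n : ℤ) + 1)).natAbs = n + 1 by omega]
    push_cast; ring_nf

/-- The radius `r ∈ (0, 1)` with `r + r⁻¹ = 2 + s²`, for which `conjPoisson φ s` is the conjugate
Poisson kernel of radius `-r`. -/
def poissonRadius (s : ℝ) : ℝ := exp (-(2 * arsinh (s / 2)))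

lemma poissonRadius_pos (s : ℝ) : 0 < poissonRadius s := exp_pos _

lemma poissonRadius_lt_one {s : ℝ} (hs : 0 < s) : poissonRadius s < 1 :=
  exp_lt_one_iff.2 (neg_neg_of_pos (mul_pos two_pos (arsinh_pos_iff.2 (half_pos hs))))

lemma poissonRadius_add_inv (s : ℝ) : poissonRadius s + (poissonRadius s)⁻¹ = 2 + s ^ 2 := by
  have hcosh := cosh_two_mul (arsinh (s / 2))
  rw [cosh_sq, sinh_arsinh, cosh_eq] at hcosh
  rw [poissonRadius, ← exp_neg, neg_neg]
  linarith

lemma poissonRadius_le {s : ℝ} (hs : 0 < s) : poissonRadius s ≤ (1 + s ^ 2)⁻¹ := by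
  rw [le_inv_comm₀ (poissonRadius_pos s) (by positivity)]
  linarith [poissonRadius_add_inv s, poissonRadius_lt_one hs]

lemma hasDerivAt_poissonRadius (s : ℝ) :
    HasDerivAt poissonRadius (poissonRadius s * -(√(1 + (s / 2) ^ 2))⁻¹) s := by
  have harsinh : HasDerivAt (fun s => -(2 * arsinh (s / 2))) (-(√(1 + (s / 2) ^ 2))⁻¹) s :=
    (((hasDerivAt_id s).div_const 2).arsinh.const_mul 2).neg.congr_deriv
      (by rw [smul_eq_mul, id_eq]; ring)
  exact harsinh.exp

lemma integrableOn_poissonRadius_pow {n : ℕ} (hn : n ≠ 0) :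
    IntegrableOn (fun s => poissonRadius s ^ n) (Ioi 0) := by
  have hcont : Continuous poissonRadius :=
    continuous_iff_continuousAt.2 fun s => (hasDerivAt_poissonRadius s).continuousAt
  refine Integrable.mono' integrable_inv_one_add_sq.integrableOn
    (hcont.pow n).aestronglyMeasurable ?_
  filter_upwards [ae_restrict_mem measurableSet_Ioi] with s (hs : 0 < s)
  have hpos := (poissonRadius_pos s).le
  rw [norm_of_nonneg (pow_nonneg hpos n)]
  exact (pow_le_of_le_one hpos (poissonRadius_lt_one hs).le hn).trans (poissonRadius_le hs)

lemma norm_integral_exp_mul_poissonRadius_pow_le {lam : ℝ} (hlam : 0 < lam) {n : ℕ} (hn : n ≠ 0) :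
    ‖∫ s in Ioi (0 : ℝ), Complex.exp (Complex.I * ((lam * s ^ 2 : ℝ) : ℂ)) *
      ((poissonRadius s ^ n : ℝ) : ℂ)‖ ≤ 2 / √lam := by
  have h := norm_integral_Ioi_exp_I_mul_sq_mul_le (W := 1) hlam
    (fun s _ => (hasDerivAt_poissonRadius s).pow n) (fun s _ => ?_)
    (fun s _ => pow_nonneg (poissonRadius_pos s).le n)
    (fun s hs => pow_le_one₀ (poissonRadius_pos s).le (poissonRadius_lt_one hs).le)
    (integrableOn_poissonRadius_pow hn)
  · simpa using h
  · have := poissonRadius_pos s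
    have hderiv : poissonRadius s * -(√(1 + (s / 2) ^ 2))⁻¹ ≤ 0 :=
      mul_nonpos_of_nonneg_of_nonpos this.le (neg_nonpos.2 (by positivity))
    exact mul_nonpos_of_nonneg_of_nonpos (by positivity) hderiv

lemma conjPoisson_eq_poissonRadius (φ s : ℝ) :
    conjPoisson φ s = 2 * -poissonRadius s * sin φ /
      (1 - 2 * -poissonRadius s * cos φ + (-poissonRadius s) ^ 2) := by
  have hr := (poissonRadius_pos s).ne'
  have hden : 1 - 2 * -poissonRadius s * cos φ + (-poissonRadius s) ^ 2 =
      2 * poissonRadius s * (s ^ 2 / 2 + bb φ ^ 2) := by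
    have hquad : 1 + poissonRadius s ^ 2 = poissonRadius s * (2 + s ^ 2) := by
      rw [← poissonRadius_add_inv]; field_simp; ring
    rw [bb_sq]; linear_combination hquad
  rw [conjPoisson, hden, show 2 * -poissonRadius s * sin φ = 2 * poissonRadius s * -sin φ by ring,
    mul_div_mul_left _ _ (mul_ne_zero two_ne_zero hr)]

lemma fourierCoeffOn_conjPoisson {s : ℝ} (hs : 0 < s) (m : ℤ) :
    fourierCoeffOn two_pi_pos (fun φ => (conjPoisson φ s : ℂ)) m =
      -Complex.I * m.sign * (-1) ^ m.natAbs * ((poissonRadius s ^ m.natAbs : ℝ) : ℂ) := by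
  have hρ : |-poissonRadius s| < 1 := by
    rw [abs_neg, abs_of_pos (poissonRadius_pos s)]; exact poissonRadius_lt_one hs
  have hsummable : Summable fun n : ℤ =>
      ‖-Complex.I * n.sign * ((-poissonRadius s : ℝ) : ℂ) ^ n.natAbs‖ := by
    refine (summable_geometric_natAbs hρ).of_nonneg_of_le (fun _ => norm_nonneg _) fun n => ?_
    rw [norm_mul, norm_mul, norm_pow, norm_neg, Complex.norm_I, one_mul, Complex.norm_real,
      norm_eq_abs]
    refine mul_le_of_le_one_left (by positivity) ?_
    rcases n.sign_trichotomy with h | h | h <;> simp [h]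
  rw [fourierCoeffOn_eq_of_hasSum hsummable fun φ => by
    rw [conjPoisson_eq_poissonRadius]; exact hasSum_conjPoisson hρ φ]
  push_cast
  rw [neg_pow]; ring

lemma integrable_uncurry_conjPoisson {μ : Measure ℝ} [IsFiniteMeasure μ] :
    Integrable (Function.uncurry conjPoisson) (μ.prod (volume.restrict (Ioi 0))) := by
  have hmeas := measurable_uncurry_conjPoisson.aestronglyMeasurable
    (μ := μ.prod (volume.restrict (Ioi 0)))
  refine (integrable_prod_iff hmeas).2
    ⟨.of_forall fun φ => (integrable_conjPoisson φ).integrableOn, ?_⟩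
  refine Integrable.mono' (integrable_const π) hmeas.norm.integral_prod_right'
    (.of_forall fun φ => ?_)
  rw [norm_of_nonneg (integral_nonneg fun s => norm_nonneg _)]
  exact integral_Ioi_abs_conjPoisson_le φ

lemma fourierCoeffOn_oscKernel_eq (lam : ℝ) (m : ℤ) :
    fourierCoeffOn two_pi_pos (oscKernel lam) m = -Complex.I * m.sign * (-1) ^ m.natAbs *
      ∫ s in Ioi (0 : ℝ), Complex.exp (Complex.I * ((lam * s ^ 2 : ℝ) : ℂ)) *
        ((poissonRadius s ^ m.natAbs : ℝ) : ℂ) := by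
  set E : ℝ → ℂ := fun s => Complex.exp (Complex.I * ((lam * s ^ 2 : ℝ) : ℂ)) with hE
  have hint : Integrable (Function.uncurry fun φ s : ℝ =>
      Complex.exp (-(m * φ * Complex.I)) * (E s * (conjPoisson φ s : ℂ)))
      (circleMeasure.prod (volume.restrict (Ioi 0))) := by
    refine Integrable.mono' integrable_uncurry_conjPoisson.norm ?_ (.of_forall fun p => ?_)
    · have hchar : Continuous fun p : ℝ × ℝ => Complex.exp (-(m * p.1 * Complex.I)) := by fun_prop
      exact (hchar.measurable.mul
        (measurable_uncurry_exp_mul_conjPoisson lam)).aestronglyMeasurable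
    · simp only [Function.uncurry, hE]
      rw [norm_mul, norm_exp_neg_int_mul_I, one_mul, norm_exp_I_mul_ofReal_mul, Complex.norm_real]
  calc fourierCoeffOn two_pi_pos (oscKernel lam) m
      = (2 * π : ℂ)⁻¹ * ∫ φ : ℝ, (∫ s in Ioi (0 : ℝ),
          Complex.exp (-(m * φ * Complex.I)) * (E s * (conjPoisson φ s : ℂ))) ∂circleMeasure := by
        simp_rw [fourierCoeffOn_two_pi_eq, oscKernel, integral_const_mul, hE]
    _ = ∫ s in Ioi (0 : ℝ), E s * fourierCoeffOn two_pi_pos (fun φ => (conjPoisson φ s : ℂ)) m := by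
        rw [integral_integral_swap hint, ← integral_const_mul]
        refine integral_congr_ae (.of_forall fun s => ?_)
        simp only [fourierCoeffOn_two_pi_eq, mul_left_comm _ (E s), integral_const_mul]
    _ = _ := by
        rw [← integral_const_mul]
        refine setIntegral_congr_fun measurableSet_Ioi fun s hs => ?_
        simp only [fourierCoeffOn_conjPoisson hs]
        ring

lemma norm_fourierCoeffOn_oscKernel_le {lam : ℝ} (hlam : 0 < lam) (m : ℤ) :
    ‖fourierCoeffOn two_pi_pos (oscKernel lam) m‖ ≤ 2 / √lam := by
  rw [fourierCoeffOn_oscKernel_eq]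
  rcases eq_or_ne m 0 with rfl | hm
  · simp only [Int.sign_zero, Int.cast_zero, mul_zero, zero_mul, norm_zero]; positivity
  · have hcoef : ‖-Complex.I * (m.sign : ℂ) * (-1) ^ m.natAbs‖ = 1 := by
      rcases lt_or_gt_of_ne hm with h | h
      · simp [Int.sign_eq_neg_one_of_neg h]
      · simp [Int.sign_eq_one_of_pos h]
    rw [norm_mul, hcoef, one_mul]
    exact norm_integral_exp_mul_poissonRadius_pow_le hlam (Int.natAbs_ne_zero.2 hm)

/-! ### Convolution on the circle -/

/-- Convolution over one period. The kernel is evaluated at `θ - t ∈ (-2π, 2π)`, so it is the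
circle convolution when `K` is `2π`-periodic. -/
def circleConv (K v : ℝ → ℂ) (θ : ℝ) : ℂ := ∫ t, K (θ - t) * v t ∂circleMeasure

lemma integral_circleMeasure_comp_sub {f : ℝ → ℂ} (hf : Function.Periodic f (2 * π)) (t : ℝ) :
    ∫ x, f (x - t) ∂circleMeasure = ∫ x, f x ∂circleMeasure := by
  rw [circleMeasure_eq_restrict_Ioc, ← intervalIntegral.integral_of_le two_pi_pos.le,
    ← intervalIntegral.integral_of_le two_pi_pos.le, intervalIntegral.integral_comp_sub_right]
  simpa [sub_eq_neg_add] using hf.intervalIntegral_add_eq (0 - t) 0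

lemma periodic_exp_neg_int_mul_I (m : ℤ) :
    Function.Periodic (fun x : ℝ => Complex.exp (-(m * x * Complex.I))) (2 * π) := fun x =>
  Complex.exp_eq_exp_iff_exists_int.2 ⟨-m, by push_cast; ring⟩

lemma eLpNorm_two_eq_ofReal_sqrt {X : Type*} [MeasurableSpace X] {μ : Measure X} {f : X → ℂ}
    (hf : MemLp f 2 μ) : eLpNorm f 2 μ = ENNReal.ofReal √(∫ x, ‖f x‖ ^ 2 ∂μ) := by
  rw [hf.eLpNorm_eq_integral_rpow_norm two_ne_zero ENNReal.ofNat_ne_top, sqrt_eq_rpow]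
  simp

section

variable {K v : ℝ → ℂ} {B : ℝ}

lemma integrable_comp_sub_mul (hK : Measurable K) (hB : ∀ x, ‖K x‖ ≤ B)
    (hv : Integrable v circleMeasure) (θ : ℝ) :
    Integrable (fun t => K (θ - t) * v t) circleMeasure :=
  hv.bdd_mul (hK.comp (measurable_const.sub measurable_id)).aestronglyMeasurable
    (.of_forall fun t => hB (θ - t))

lemma continuous_circleConv (hK : Measurable K) (hB : ∀ x, ‖K x‖ ≤ B)
    (hKc : ∀ᵐ x, ContinuousAt K x) (hv : Integrable v circleMeasure) :
    Continuous (circleConv K v) := by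
  refine continuous_iff_continuousAt.2 fun θ => continuousAt_of_dominated
    (.of_forall fun x => (integrable_comp_sub_mul hK hB hv x).1)
    (.of_forall fun x => .of_forall fun t => ?_) (hv.norm.const_mul B) ?_
  · rw [norm_mul]; gcongr; exact hB _
  · filter_upwards [ae_restrict_of_ae
      ((Measure.measurePreserving_sub_left volume θ).quasiMeasurePreserving.ae hKc)] with t ht
    exact (ht.comp (f := fun x => x - t) (by fun_prop)).mul continuousAt_const

lemma fourierCoeffOn_circleConv (hK : Measurable K) (hB : ∀ x, ‖K x‖ ≤ B)
    (hper : Function.Periodic K (2 * π)) (hv : Integrable v circleMeasure) (m : ℤ) :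
    fourierCoeffOn two_pi_pos (circleConv K v) m =
      2 * π * fourierCoeffOn two_pi_pos K m * fourierCoeffOn two_pi_pos v m := by
  set χ : ℝ → ℂ := fun x => Complex.exp (-(m * x * Complex.I)) with hχ
  have hχ_add (x t : ℝ) : χ x = χ (x - t) * χ t := by
    simp only [hχ, ← Complex.exp_add]; congr 1; push_cast; ring
  have hint : Integrable (Function.uncurry fun x t : ℝ => χ x * (K (x - t) * v t))
      (circleMeasure.prod circleMeasure) := by
    have hkernel : Measurable fun p : ℝ × ℝ => χ p.1 * K (p.1 - p.2) := by fun_prop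
    refine ((hv.comp_snd _).bdd_mul hkernel.aestronglyMeasurable
      (.of_forall fun p => (?_ : _ ≤ B))).congr (.of_forall fun p => mul_assoc _ _ _)
    rw [norm_mul, hχ, norm_exp_neg_int_mul_I, one_mul]; exact hB _
  calc fourierCoeffOn two_pi_pos (circleConv K v) m
      = (2 * π : ℂ)⁻¹ * ∫ x, ∫ t, χ x * (K (x - t) * v t) ∂circleMeasure ∂circleMeasure := by
        simp_rw [fourierCoeffOn_two_pi_eq, circleConv, integral_const_mul, hχ]
    _ = (2 * π : ℂ)⁻¹ * ∫ t, (∫ x, χ x * K x ∂circleMeasure) * (χ t * v t) ∂circleMeasure := by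
        rw [integral_integral_swap hint]
        congr 1
        refine integral_congr_ae (.of_forall fun t => ?_)
        have hshift : ∫ x, χ x * K x ∂circleMeasure =
            ∫ x, χ (x - t) * K (x - t) ∂circleMeasure :=
          (integral_circleMeasure_comp_sub ((periodic_exp_neg_int_mul_I m).mul hper) t).symm
        simp only [hshift, ← integral_mul_const]
        refine integral_congr_ae (.of_forall fun x => ?_)
        simp only [hχ_add x t]; ring
    _ = _ := by
        rw [integral_const_mul, fourierCoeffOn_two_pi_eq K, fourierCoeffOn_two_pi_eq v,
          mul_inv_cancel_left₀ (by simp [pi_ne_zero])]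
        simp only [hχ]; ring

lemma enorm_circleConv_le (hB : ∀ x, ‖K x‖ ≤ B) (hv : AEStronglyMeasurable v circleMeasure)
    (θ : ℝ) : ‖circleConv K v θ‖ₑ ≤
      ENNReal.ofReal B * (eLpNorm v 2 circleMeasure * ENNReal.ofReal (2 * π) ^ (1 / 2 : ℝ)) := by
  have hKB (x : ℝ) : ‖K x‖ₑ ≤ ENNReal.ofReal B := by
    rw [← ofReal_norm]; exact ENNReal.ofReal_le_ofReal (hB x)
  calc ‖circleConv K v θ‖ₑ ≤ ∫⁻ t, ‖K (θ - t) * v t‖ₑ ∂circleMeasure :=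
        enorm_integral_le_lintegral_enorm _
    _ ≤ ∫⁻ t, ENNReal.ofReal B * ‖v t‖ₑ ∂circleMeasure := by
        refine lintegral_mono fun t => ?_
        rw [enorm_mul]; gcongr; exact hKB _
    _ = ENNReal.ofReal B * eLpNorm v 1 circleMeasure := by
        rw [lintegral_const_mul' _ _ ENNReal.ofReal_ne_top, eLpNorm_one_eq_lintegral_enorm]
    _ ≤ _ := by
        gcongr
        refine (eLpNorm_le_eLpNorm_mul_rpow_measure_univ one_le_two hv).trans_eq ?_
        rw [circleMeasure_univ]; norm_num

lemma eLpNorm_circleConv_le (hB : ∀ x, ‖K x‖ ≤ B) (hv : AEStronglyMeasurable v circleMeasure) :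
    eLpNorm (circleConv K v) 2 circleMeasure ≤
      ENNReal.ofReal (2 * π * B) * eLpNorm v 2 circleMeasure := by
  have hL : ENNReal.ofReal (2 * π) ^ (1 / 2 : ℝ) * ENNReal.ofReal (2 * π) ^ (1 / 2 : ℝ) =
      ENNReal.ofReal (2 * π) := by
    rw [← ENNReal.rpow_add_of_nonneg _ _ (by norm_num) (by norm_num)]; norm_num
  calc eLpNorm (circleConv K v) 2 circleMeasure
      ≤ (ENNReal.ofReal B * (eLpNorm v 2 circleMeasure * ENNReal.ofReal (2 * π) ^ (1 / 2 : ℝ))) •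
          circleMeasure univ ^ (2 : ℝ≥0∞).toReal⁻¹ :=
        eLpNorm_le_of_ae_enorm_bound (.of_forall (enorm_circleConv_le hB hv))
    _ = ENNReal.ofReal (2 * π) ^ (1 / 2 : ℝ) * ENNReal.ofReal (2 * π) ^ (1 / 2 : ℝ) *
          ENNReal.ofReal B * eLpNorm v 2 circleMeasure := by
        rw [circleMeasure_univ, ENNReal.toReal_ofNat, ← one_div, smul_eq_mul]
        ring
    _ = _ := by rw [hL, ENNReal.ofReal_mul two_pi_pos.le]

lemma eLpNorm_circleConv_le_of_fourierCoeffOn (hK : Measurable K) (hB : ∀ x, ‖K x‖ ≤ B)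
    (hKc : ∀ᵐ x, ContinuousAt K x) (hper : Function.Periodic K (2 * π)) {M : ℝ}
    (hM : ∀ m, ‖fourierCoeffOn two_pi_pos K m‖ ≤ M) (hv : MemLp v 2 circleMeasure) :
    eLpNorm (circleConv K v) 2 circleMeasure ≤
      ENNReal.ofReal (2 * π * M) * eLpNorm v 2 circleMeasure := by
  have hv1 : Integrable v circleMeasure := hv.integrable one_le_two
  have hM0 : 0 ≤ M := (norm_nonneg _).trans (hM 0)
  have hu : MemLp (circleConv K v) 2 circleMeasure :=
    ⟨(continuous_circleConv hK hB hKc hv1).aestronglyMeasurable,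
      (eLpNorm_circleConv_le hB hv.1).trans_lt
        (ENNReal.mul_lt_top ENNReal.ofReal_lt_top hv.2)⟩
  have hcoeff (m : ℤ) : ‖fourierCoeffOn two_pi_pos (circleConv K v) m‖ ^ 2 ≤
      (2 * π * M) ^ 2 * ‖fourierCoeffOn two_pi_pos v m‖ ^ 2 := by
    rw [fourierCoeffOn_circleConv hK hB hper hv1, ← mul_pow, norm_mul, norm_mul]
    gcongr
    · simp [abs_of_pos pi_pos]
    · exact hM m
  have hparseval {f : ℝ → ℂ} (hf : MemLp f 2 circleMeasure) :
      HasSum (fun m => ‖fourierCoeffOn two_pi_pos f m‖ ^ 2)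
        ((2 * π)⁻¹ * ∫ x, ‖f x‖ ^ 2 ∂circleMeasure) := by
    rw [circleMeasure_eq_restrict_Ioc] at hf ⊢
    simpa [intervalIntegral.integral_of_le two_pi_pos.le] using
      hasSum_sq_fourierCoeffOn two_pi_pos hf
  have hle := hasSum_le hcoeff (hparseval hu) ((hparseval hv).mul_left _)
  rw [mul_left_comm, mul_le_mul_iff_right₀ (inv_pos.2 two_pi_pos)] at hle
  rw [eLpNorm_two_eq_ofReal_sqrt hu, eLpNorm_two_eq_ofReal_sqrt hv,
    ← ENNReal.ofReal_mul (by positivity)]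
  refine ENNReal.ofReal_le_ofReal ((sqrt_le_sqrt hle).trans_eq ?_)
  rw [sqrt_mul (sq_nonneg _), sqrt_sq (by positivity)]

end

/-- The angular kernel `χ(b) H`, without its radial amplitude. -/
def cutoffKernel (χ : ℝ → ℝ) (lam φ : ℝ) : ℂ := (χ (bb φ) : ℂ) * oscKernel lam φ

section

variable {χ : ℝ → ℝ}

lemma measurable_cutoffKernel (hχ : Continuous χ) (lam : ℝ) : Measurable (cutoffKernel χ lam) :=
  (Complex.continuous_ofReal.comp (hχ.comp continuous_bb)).measurable.mul (measurable_oscKernel lam)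

lemma norm_cutoffKernel_le {X : ℝ} (hX : ∀ φ, |χ (bb φ)| ≤ X) (lam φ : ℝ) :
    ‖cutoffKernel χ lam φ‖ ≤ X * π := by
  rw [cutoffKernel, norm_mul, Complex.norm_real]
  exact mul_le_mul (hX φ) (norm_oscKernel_le lam φ) (norm_nonneg _) ((abs_nonneg _).trans (hX φ))

lemma continuousAt_cutoffKernel (hχ : Continuous χ) (lam : ℝ) {φ : ℝ} (h : bb φ ≠ 0) :
    ContinuousAt (cutoffKernel χ lam) φ :=
  (Complex.continuous_ofReal.comp (hχ.comp continuous_bb)).continuousAt.mul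
    (continuousAt_oscKernel lam h)

lemma ae_continuousAt_cutoffKernel (hχ : Continuous χ) (lam : ℝ) :
    ∀ᵐ φ, ContinuousAt (cutoffKernel χ lam) φ :=
  ae_bb_ne_zero.mono fun _ h => continuousAt_cutoffKernel hχ lam h

lemma isOpen_cutoffKernel_ne_zero (hχ : Continuous χ) (lam : ℝ) :
    IsOpen {φ | cutoffKernel χ lam φ ≠ 0} := by
  refine isOpen_iff_mem_nhds.2 fun φ (hφ : cutoffKernel χ lam φ ≠ 0) => ?_
  have hb : bb φ ≠ 0 := fun h => hφ (by rw [cutoffKernel, oscKernel_of_bb_eq_zero lam h, mul_zero])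
  exact (continuousAt_cutoffKernel hχ lam hb).eventually_ne hφ

lemma abs_one_sub_le {X : ℝ} (hX : ∀ φ, |χ (bb φ)| ≤ X) (φ : ℝ) : |(1 - χ) (bb φ)| ≤ 1 + X :=
  (abs_sub (1 : ℝ) _).trans (add_le_add abs_one.le (hX φ))

lemma norm_cutoffKernel_one_sub_le {X η lam : ℝ} (hX : ∀ φ, |χ (bb φ)| ≤ X) (hη : 0 < η)
    (hχη : ∀ x, |x| < η → χ x = 1) (hlam : 0 < lam) (φ : ℝ) :
    ‖cutoffKernel (1 - χ) lam φ‖ ≤ (1 + X) * (2 / η ^ 2) / √lam := by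
  have hX0 : 0 ≤ X := (abs_nonneg _).trans (hX 0)
  rw [cutoffKernel, norm_mul, Complex.norm_real, Pi.sub_apply, Pi.one_apply]
  rcases lt_or_ge |bb φ| η with h | h
  · rw [hχη _ h, sub_self, norm_zero, zero_mul]; positivity
  · have hb : bb φ ≠ 0 := abs_pos.1 (hη.trans_le h)
    have hχ_le : |1 - χ (bb φ)| ≤ 1 + X := abs_one_sub_le hX φ
    have hosc : ‖oscKernel lam φ‖ ≤ 2 / η ^ 2 / √lam :=
      (norm_oscKernel_le_div_sqrt hlam hb).trans (by rw [← sq_abs (bb φ)]; gcongr)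
    rw [norm_eq_abs]
    calc |1 - χ (bb φ)| * ‖oscKernel lam φ‖ ≤ (1 + X) * (2 / η ^ 2 / √lam) := by gcongr
      _ = (1 + X) * (2 / η ^ 2) / √lam := by ring

lemma circleConv_cutoffKernel_eq_sub {X lam : ℝ} (hχ : Continuous χ) (hX : ∀ φ, |χ (bb φ)| ≤ X)
    {v : ℝ → ℂ} (hv : Integrable v circleMeasure) :
    circleConv (cutoffKernel χ lam) v =
      circleConv (oscKernel lam) v - circleConv (cutoffKernel (1 - χ) lam) v := by
  ext θ
  simp only [Pi.sub_apply, circleConv]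
  rw [← integral_sub
    (integrable_comp_sub_mul (measurable_oscKernel lam) (norm_oscKernel_le lam) hv θ)
    (integrable_comp_sub_mul (measurable_cutoffKernel (continuous_one.sub hχ) lam)
      (norm_cutoffKernel_le (abs_one_sub_le hX) lam) hv θ)]
  refine integral_congr_ae (.of_forall fun t => ?_)
  simp only [cutoffKernel, Pi.sub_apply, Pi.one_apply]; push_cast; ring

/-- The constant `C` in the bound `C λ^{-1/2}` for convolution with `cutoffKernel`, where `X` bounds
the cutoff and `η` is the radius on which it equals `1`. -/
def angularConst (X η : ℝ) : ℝ := 2 * π * (2 + (1 + X) * (2 / η ^ 2))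

lemma angularConst_pos {X : ℝ} (hX : 0 ≤ X) (η : ℝ) : 0 < angularConst X η := by
  unfold angularConst; positivity

lemma eLpNorm_circleConv_cutoffKernel_le {X η lam : ℝ} (hχ : Continuous χ)
    (hX : ∀ φ, |χ (bb φ)| ≤ X) (hη : 0 < η) (hχη : ∀ x, |x| < η → χ x = 1) (hlam : 0 < lam)
    {v : ℝ → ℂ} (hv : MemLp v 2 circleMeasure) :
    eLpNorm (circleConv (cutoffKernel χ lam) v) 2 circleMeasure ≤
      ENNReal.ofReal (angularConst X η / √lam) * eLpNorm v 2 circleMeasure := by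
  have hX0 : 0 ≤ X := (abs_nonneg _).trans (hX 0)
  have hv1 : Integrable v circleMeasure := hv.integrable one_le_two
  have hosc_cont : ∀ᵐ φ, ContinuousAt (oscKernel lam) φ :=
    ae_bb_ne_zero.mono fun _ h => continuousAt_oscKernel lam h
  have hfar := norm_cutoffKernel_one_sub_le hX hη hχη hlam
  have hosc := eLpNorm_circleConv_le_of_fourierCoeffOn (measurable_oscKernel lam)
    (norm_oscKernel_le lam) hosc_cont (periodic_oscKernel lam)
    (norm_fourierCoeffOn_oscKernel_le hlam) hv
  rw [circleConv_cutoffKernel_eq_sub hχ hX hv1]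
  calc _ ≤ eLpNorm (circleConv (oscKernel lam) v) 2 circleMeasure +
        eLpNorm (circleConv (cutoffKernel (1 - χ) lam) v) 2 circleMeasure :=
        eLpNorm_sub_le
          (continuous_circleConv (measurable_oscKernel lam) (norm_oscKernel_le lam) hosc_cont
            hv1).aestronglyMeasurable
          (continuous_circleConv (measurable_cutoffKernel (continuous_one.sub hχ) lam) hfar
            (ae_continuousAt_cutoffKernel (continuous_one.sub hχ) lam) hv1).aestronglyMeasurable
          one_le_two
    _ ≤ ENNReal.ofReal (2 * π * (2 / √lam)) * eLpNorm v 2 circleMeasure +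
        ENNReal.ofReal (2 * π * ((1 + X) * (2 / η ^ 2) / √lam)) * eLpNorm v 2 circleMeasure :=
        add_le_add hosc (eLpNorm_circleConv_le hfar hv.1)
    _ = _ := by
        rw [← add_mul, ← ENNReal.ofReal_add (by positivity) (by positivity), angularConst]
        congr 2; ring

end

/-! ### Integrals of non-measurable families -/

section

variable {X Y : Type*} [MeasurableSpace X] [MeasurableSpace Y]

lemma aestronglyMeasurable_restrict_of_mul {μ : Measure X} {k φ : X → ℂ} (hk : Measurable k)
    (h : AEStronglyMeasurable (fun x => k x * φ x) μ) :
    AEStronglyMeasurable φ (μ.restrict {x | k x ≠ 0}) := by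
  have hs : MeasurableSet {x | k x ≠ 0} := hk (measurableSet_singleton 0).compl
  refine (hk.inv.aestronglyMeasurable.mul h.restrict).congr ?_
  filter_upwards [ae_restrict_mem hs] with x hx
  rw [Pi.mul_apply, Pi.inv_apply, inv_mul_cancel_left₀ hx]

/-- The idea is to cut `φ` off to the union of those `{k i ≠ 0}` on which it is measurable; by
Lindelöf this union is a countable one. -/
lemma exists_aestronglyMeasurable_integral_mul_eq [TopologicalSpace X]
    [SecondCountableTopology X] [OpensMeasurableSpace X] {ι : Type*} {μ : Measure X}
    {k : ι → X → ℂ} (hk : ∀ i, Measurable (k i)) (hopen : ∀ i, IsOpen {x | k i x ≠ 0})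
    (φ : X → ℂ) : ∃ v : X → ℂ, AEStronglyMeasurable v μ ∧ (∀ x, ‖v x‖ ≤ ‖φ x‖) ∧
      ∀ i, ∫ x, k i x * φ x ∂μ = 0 ∨ ∫ x, k i x * φ x ∂μ = ∫ x, k i x * v x ∂μ := by
  set J : Set ι := {i | Integrable (fun x => k i x * φ x) μ}
  obtain ⟨J', hJ'J, hJ'c, hJ'U⟩ := TopologicalSpace.isOpen_biUnion_countable J
    (fun i => {x | k i x ≠ 0}) fun i _ => hopen i
  set U : Set X := ⋃ i ∈ J, {x | k i x ≠ 0}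
  have hU_meas : MeasurableSet U := (isOpen_biUnion fun i _ => hopen i).measurableSet
  refine ⟨U.indicator φ, ?_, fun x => norm_indicator_le_norm_self _ _, fun i => ?_⟩
  · have := hJ'c.to_subtype
    rw [aestronglyMeasurable_indicator_iff hU_meas, ← hJ'U, biUnion_eq_iUnion,
      aestronglyMeasurable_iUnion_iff]
    exact fun i => aestronglyMeasurable_restrict_of_mul (hk i) (hJ'J i.2).1
  · by_cases hi : i ∈ J
    · right
      congr 1 with x
      by_cases hx : x ∈ U
      · rw [indicator_of_mem hx]
      · have hkx : k i x = 0 := by_contra fun hne => hx (mem_biUnion hi hne)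
        rw [hkx, zero_mul, zero_mul]
    · exact .inl (integral_undef hi)

lemma lintegral_comp_eq_tsum {ι : Type*} [MeasurableSpace ι] [Countable ι]
    [MeasurableSingletonClass ι] {ν : Measure X} {κ : X → ι} (hκ : Measurable κ) (f : ι → ℝ≥0∞) :
    ∫⁻ x, f (κ x) ∂ν = ∑' i, f i * ν (κ ⁻¹' {i}) := by
  rw [← lintegral_map (measurable_of_countable f) hκ, lintegral_countable']
  simp only [Measure.map_apply hκ (measurableSet_singleton _)]

lemma exists_lintegral_le_lintegral_comp [Nonempty X] {ι : Type*} [MeasurableSpace ι] [Countable ι]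
    [MeasurableSingletonClass ι] {ν : Measure X} [IsFiniteMeasure ν] {κ : X → ι}
    (hκ : Measurable κ) {T : X → ℝ≥0∞} (hT : ∫⁻ x, T x ∂ν ≠ ∞) :
    ∃ t : ι → X, (∀ᵐ x ∂ν, κ (t (κ x)) = κ x) ∧ ∫⁻ x, T x ∂ν ≤ ∫⁻ x, T (t (κ x)) ∂ν := by
  have hmeas (i : ι) : MeasurableSet (κ ⁻¹' {i}) := hκ (measurableSet_singleton i)
  have hex (i : ι) : ∃ x, (ν (κ ⁻¹' {i}) ≠ 0 → κ x = i) ∧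
      ∫⁻ y in κ ⁻¹' {i}, T y ∂ν ≤ T x * ν (κ ⁻¹' {i}) := by
    by_cases h0 : ν (κ ⁻¹' {i}) = 0
    · exact ⟨Classical.arbitrary X, fun h => (h h0).elim, by
        rw [setLIntegral_measure_zero _ _ h0]; exact zero_le⟩
    · obtain ⟨x, hx, hle⟩ := exists_setLAverage_le h0 (hmeas i).nullMeasurableSet
        (ne_top_of_le_ne_top hT (setLIntegral_le_lintegral _ _))
      rw [setLAverage_eq, ENNReal.div_le_iff h0 (measure_ne_top _ _)] at hle
      exact ⟨x, fun _ => hx, hle⟩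
  choose t htκ htT using hex
  refine ⟨t, ?_, ?_⟩
  · refine ae_of_ae_map hκ.aemeasurable (p := fun i => κ (t i) = i) (ae_iff_of_countable.2 ?_)
    intro i hi
    rw [Measure.map_apply hκ (measurableSet_singleton i)] at hi
    exact htκ i hi
  · calc ∫⁻ x, T x ∂ν = ∑' i, ∫⁻ x in κ ⁻¹' {i}, T x ∂ν := by
          rw [← lintegral_iUnion hmeas (fun i j hij => Disjoint.preimage _ (by simpa using hij)),
            ← preimage_iUnion, iUnion_of_singleton, preimage_univ, setLIntegral_univ]
      _ ≤ ∑' i, T (t i) * ν (κ ⁻¹' {i}) := ENNReal.tsum_le_tsum htT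
      _ = ∫⁻ x, T (t (κ x)) ∂ν := (lintegral_comp_eq_tsum hκ fun i => T (t i)).symm

lemma lintegral_comp_lintegral_swap {ι : Type*} [MeasurableSpace ι] [Countable ι]
    [MeasurableSingletonClass ι] {ν : Measure X} {μ : Measure Y} {κ : X → ι} (hκ : Measurable κ)
    {g : ι → Y → ℝ≥0∞} (hg : ∀ i, AEMeasurable (g i) μ) :
    ∫⁻ x, ∫⁻ y, g (κ x) y ∂μ ∂ν = ∫⁻ y, ∫⁻ x, g (κ x) y ∂ν ∂μ := by
  have hinner (y : Y) := lintegral_comp_eq_tsum (ν := ν) hκ fun i => g i y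
  rw [lintegral_comp_eq_tsum hκ fun i => ∫⁻ y, g i y ∂μ]
  simp only [hinner, lintegral_tsum fun i => (hg i).mul_const _, lintegral_mul_const'' _ (hg _)]

lemma aemeasurable_lintegral_comp {ι : Type*} [MeasurableSpace ι] [Countable ι]
    [MeasurableSingletonClass ι] {ν : Measure X} {μ : Measure Y} {κ : X → ι} (hκ : Measurable κ)
    {g : ι → Y → ℝ≥0∞} (hg : ∀ i, AEMeasurable (g i) μ) :
    AEMeasurable (fun y => ∫⁻ x, g (κ x) y ∂ν) μ := by
  have hinner (y : Y) := lintegral_comp_eq_tsum (ν := ν) hκ fun i => g i y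
  simp only [hinner]
  exact AEMeasurable.tsum fun i => (hg i).mul_const _

lemma limsup_lintegral_le_of_aemeasurable {μ : Measure Y} {f : ℕ → Y → ℝ≥0∞} (g : Y → ℝ≥0∞)
    (hf : ∀ n, AEMeasurable (f n) μ) (hfg : ∀ n, f n ≤ᵐ[μ] g) (hg : ∫⁻ y, g y ∂μ ≠ ∞) :
    limsup (fun n => ∫⁻ y, f n y ∂μ) atTop ≤ ∫⁻ y, limsup (fun n => f n y) atTop ∂μ := by
  have h := limsup_lintegral_le g (fun n => (hf n).measurable_mk)
    (fun n => (hf n).ae_eq_mk.symm.le.trans (hfg n)) hg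
  simp only [fun n => lintegral_congr_ae (hf n).ae_eq_mk]
  refine h.trans (lintegral_mono_ae ?_)
  filter_upwards [ae_all_iff.2 fun n => (hf n).ae_eq_mk] with y hy
  simp only [hy, le_refl]

end

lemma measurable_floor_mul (n : ℕ) : Measurable fun x : ℝ => ⌊(n + 1 : ℝ) * x⌋ :=
  Int.measurable_floor.comp (measurable_const_mul _)

lemma tendsto_of_floor_mul_eq {x : ℝ} {y : ℕ → ℝ}
    (h : ∀ n : ℕ, ⌊(n + 1 : ℝ) * y n⌋ = ⌊(n + 1 : ℝ) * x⌋) : Tendsto y atTop (𝓝 x) := by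
  refine tendsto_iff_dist_tendsto_zero.2 (squeeze_zero (fun _ => dist_nonneg) (fun n => ?_)
    tendsto_one_div_add_atTop_nhds_zero_nat)
  have hn : (0 : ℝ) < n + 1 := by positivity
  rw [dist_eq, le_div_iff₀' hn]
  have hlt := (Int.abs_sub_lt_one_of_floor_eq_floor (h n)).le
  rwa [← mul_sub, abs_mul, abs_of_pos hn] at hlt

section

variable {Y : Type*} [MeasurableSpace Y] {μ : Measure Y} {ν : Measure ℝ} [IsFiniteMeasure ν]
  {B : ℝ≥0∞} {M : Y → ℝ≥0∞}

lemma limsup_lintegral_comp_le {F : ℝ → ℝ≥0∞} (hF : Continuous F) {D : ℝ≥0∞} (hD : D ≠ ∞)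
    (hFD : ∀ θ, F θ ≤ D) {τ : ℕ → ℝ → ℝ} (hτ : ∀ n, Measurable (τ n))
    (hlim : ∀ᵐ θ ∂ν, Tendsto (fun n => τ n θ) atTop (𝓝 θ)) :
    limsup (fun n => ∫⁻ θ, F (τ n θ) ∂ν) atTop = ∫⁻ θ, F θ ∂ν :=
  (tendsto_lintegral_of_dominated_convergence (fun _ => D)
    (fun n => hF.measurable.comp (hτ n)) (fun n => .of_forall fun θ => hFD _)
    (by rw [lintegral_const]; exact ENNReal.mul_ne_top hD (measure_ne_top _ _))
    (hlim.mono fun θ hθ => (hF.tendsto θ).comp hθ)).limsup_eq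

/-- A Tonelli inequality for a family `g` with no measurability in `θ`: the integral of `T` is
bounded by Riemann sums over sample points, to which the reverse Fatou lemma applies. -/
lemma lintegral_le_lintegral_of_continuous_majorant {T : ℝ → ℝ≥0∞} {g : ℝ → Y → ℝ≥0∞}
    (hg : ∀ θ, AEMeasurable (g θ) μ) (hT : ∀ θ, T θ ≤ ∫⁻ y, g θ y ∂μ) (hB : B ≠ ∞)
    (hM : ∫⁻ y, M y ∂μ ≠ ∞)
    (hF : ∀ᵐ y ∂μ, M y ≠ ∞ → ∃ F : ℝ → ℝ≥0∞, Continuous F ∧ (∀ θ, g θ y ≤ F θ) ∧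
      (∀ θ, F θ ≤ B * M y) ∧ ∫⁻ θ, F θ ∂ν ≤ M y) :
    ∫⁻ θ, T θ ∂ν ≤ ∫⁻ y, M y ∂μ := by
  have hgM : ∀ᵐ y ∂μ, ∀ θ, g θ y ≤ (B + 1) * M y := hF.mono fun y hy θ => by
    by_cases hMy : M y = ∞
    · simp [hMy]
    · obtain ⟨F, -, hgF, hFB, -⟩ := hy hMy
      exact (hgF θ).trans ((hFB θ).trans (by gcongr; exact le_self_add))
  have hBM : ∫⁻ y, (B + 1) * M y ∂μ ≠ ∞ := by
    rw [lintegral_const_mul' _ _ (by finiteness)]; finiteness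
  have hT_fin : ∫⁻ θ, T θ ∂ν ≠ ∞ := by
    refine ne_top_of_le_ne_top ?_ (lintegral_mono fun θ =>
      (hT θ).trans (lintegral_mono_ae (hgM.mono fun y hy => hy θ)))
    rw [lintegral_const]; finiteness
  choose t htκ htT using fun n : ℕ =>
    exists_lintegral_le_lintegral_comp (measurable_floor_mul n) hT_fin
  set τ : ℕ → ℝ → ℝ := fun n θ => t n ⌊(n + 1 : ℝ) * θ⌋
  have hτ_meas (n : ℕ) : Measurable (τ n) :=
    (measurable_of_countable (t n)).comp (measurable_floor_mul n)
  have hτ_lim : ∀ᵐ θ ∂ν, Tendsto (fun n => τ n θ) atTop (𝓝 θ) :=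
    (ae_all_iff.2 htκ).mono fun θ hθ => tendsto_of_floor_mul_eq hθ
  have hbound (n : ℕ) : (fun y => ∫⁻ θ, g (τ n θ) y ∂ν) ≤ᵐ[μ] fun y => ν univ * ((B + 1) * M y) :=
    hgM.mono fun y hy => (lintegral_mono fun θ => hy (τ n θ)).trans_eq (by
      rw [lintegral_const, mul_comm])
  calc ∫⁻ θ, T θ ∂ν ≤ limsup (fun n => ∫⁻ y, ∫⁻ θ, g (τ n θ) y ∂ν ∂μ) atTop := by
        refine le_limsup_of_frequently_le (.of_forall fun n => ?_)
        rw [← lintegral_comp_lintegral_swap (measurable_floor_mul n) fun i => hg (t n i)]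
        exact (htT n).trans (lintegral_mono fun θ => hT _)
    _ ≤ ∫⁻ y, limsup (fun n => ∫⁻ θ, g (τ n θ) y ∂ν) atTop ∂μ :=
        limsup_lintegral_le_of_aemeasurable _
          (fun n => aemeasurable_lintegral_comp (measurable_floor_mul n) fun i => hg (t n i)) hbound
          (by rw [lintegral_const_mul' _ _ (by finiteness)]; finiteness)
    _ ≤ ∫⁻ y, M y ∂μ := lintegral_mono_ae <| hF.mono fun y hy => by
        by_cases hMy : M y = ∞
        · rw [hMy]; exact le_top
        · obtain ⟨F, hFc, hgF, hFB, hFM⟩ := hy hMy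
          refine (limsup_le_limsup (.of_forall fun n => lintegral_mono fun θ => hgF _)).trans ?_
          rwa [limsup_lintegral_comp_le hFc (by finiteness) hFB hτ_meas hτ_lim]

lemma sq_lintegral_le_measure_univ_mul {f : Y → ℝ≥0∞} (hf : AEMeasurable f μ) :
    (∫⁻ y, f y ∂μ) ^ 2 ≤ μ univ * ∫⁻ y, f y ^ 2 ∂μ := by
  have hcs := ENNReal.lintegral_mul_le_Lp_mul_Lq μ HolderConjugate.two_two hf
    (aemeasurable_const (b := (1 : ℝ≥0∞)))
  simp only [Pi.mul_apply, mul_one, one_pow, lintegral_one,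
    ENNReal.rpow_two] at hcs
  calc (∫⁻ y, f y ∂μ) ^ 2 ≤ ((∫⁻ y, f y ^ 2 ∂μ) ^ (1 / 2 : ℝ) * μ univ ^ (1 / 2 : ℝ)) ^ 2 := by
        gcongr
    _ = μ univ * ∫⁻ y, f y ^ 2 ∂μ := by
        simp only [mul_pow, ← ENNReal.rpow_natCast, ← ENNReal.rpow_mul]
        norm_num [mul_comm]

lemma lintegral_enorm_integral_sq_le [IsFiniteMeasure μ] {G : ℝ → Y → ℂ} (hB : B ≠ ∞)
    (hM : ∫⁻ y, M y ∂μ ≠ ∞)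
    (hF : ∀ᵐ y ∂μ, M y ≠ ∞ → ∃ F : ℝ → ℝ≥0∞, Continuous F ∧ (∀ θ, ‖G θ y‖ₑ ^ 2 ≤ F θ) ∧
      (∀ θ, F θ ≤ B * M y) ∧ ∫⁻ θ, F θ ∂ν ≤ M y) :
    ∫⁻ θ, ‖∫ y, G θ y ∂μ‖ₑ ^ 2 ∂ν ≤ μ univ * ∫⁻ y, M y ∂μ := by
  classical
  set g : ℝ → Y → ℝ≥0∞ := fun θ y => if Integrable (G θ) μ then ‖G θ y‖ₑ ^ 2 else 0 with hg
  rw [← smul_eq_mul, ← lintegral_smul_measure]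
  refine lintegral_le_lintegral_of_continuous_majorant (g := g) (fun θ => ?_) (fun θ => ?_) hB ?_
    (Measure.ae_smul_measure (hF.mono fun y hy hMy => ?_) _)
  · by_cases hi : Integrable (G θ) μ
    · simp only [hg, if_pos hi]
      exact (hi.1.enorm.pow_const 2).smul_measure _
    · simp only [hg, if_neg hi, aemeasurable_const]
  · rw [lintegral_smul_measure, smul_eq_mul]
    by_cases hi : Integrable (G θ) μ
    · simp only [hg, if_pos hi]
      exact (pow_le_pow_left' (enorm_integral_le_lintegral_enorm _) 2).trans
        (sq_lintegral_le_measure_univ_mul hi.1.enorm)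
    · simp [integral_undef hi]
  · rw [lintegral_smul_measure, smul_eq_mul]; finiteness
  · obtain ⟨F, hFc, hGF, hF'⟩ := hy hMy
    refine ⟨F, hFc, fun θ => le_trans ?_ (hGF θ), hF'⟩
    simp only [hg]
    split_ifs
    · exact le_rfl
    · exact zero_le

end

/-! ### The radial integral -/

lemma eLpNorm_two_sq_eq_lintegral {Y : Type*} [MeasurableSpace Y] (μ : Measure Y) (u : Y → ℂ) :
    eLpNorm u 2 μ ^ 2 = ∫⁻ y, ‖u y‖ₑ ^ 2 ∂μ := by
  simpa using eLpNorm_nnreal_pow_eq_lintegral (f := u) (μ := μ) (two_ne_zero (α := ℝ≥0))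

section

variable {χ : ℝ → ℝ} {X η lam : ℝ}

lemma exists_memLp_enorm_circleConv_cutoffKernel_le (hχ : Continuous χ) (lam : ℝ) {u : ℝ → ℂ}
    (hu : eLpNorm u 2 circleMeasure ≠ ∞) :
    ∃ v, MemLp v 2 circleMeasure ∧ eLpNorm v 2 circleMeasure ≤ eLpNorm u 2 circleMeasure ∧
      ∀ θ, ‖circleConv (cutoffKernel χ lam) u θ‖ₑ ≤ ‖circleConv (cutoffKernel χ lam) v θ‖ₑ := by
  obtain ⟨v, hv_meas, hvu, hconv⟩ := exists_aestronglyMeasurable_integral_mul_eq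
    (μ := circleMeasure) (k := fun θ t => cutoffKernel χ lam (θ - t))
    (fun θ => (measurable_cutoffKernel hχ lam).comp (measurable_const.sub measurable_id))
    (fun θ => (isOpen_cutoffKernel_ne_zero hχ lam).preimage (continuous_const.sub continuous_id)) u
  have hvu_norm : eLpNorm v 2 circleMeasure ≤ eLpNorm u 2 circleMeasure := eLpNorm_mono hvu
  refine ⟨v, ⟨hv_meas, hvu_norm.trans_lt hu.lt_top⟩, hvu_norm, fun θ => ?_⟩
  rcases hconv θ with h | h
  · rw [circleConv, h, enorm_zero]; exact zero_le
  · exact (congrArg enorm h).le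

lemma exists_continuous_majorant_circleConv_cutoffKernel (hχ : Continuous χ)
    (hX : ∀ φ, |χ (bb φ)| ≤ X) (hη : 0 < η) (hχη : ∀ x, |x| < η → χ x = 1) (hlam : 0 < lam)
    {u : ℝ → ℂ} (hu : eLpNorm u 2 circleMeasure ≠ ∞) :
    ∃ F : ℝ → ℝ≥0∞, Continuous F ∧
      (∀ θ, ‖circleConv (cutoffKernel χ lam) u θ‖ₑ ^ 2 ≤ F θ) ∧
      (∀ θ, F θ ≤ ENNReal.ofReal ((X * π) ^ 2 * (2 * π)) * eLpNorm u 2 circleMeasure ^ 2) ∧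
      ∫⁻ θ, F θ ∂circleMeasure ≤
        ENNReal.ofReal (angularConst X η ^ 2 / lam) * eLpNorm u 2 circleMeasure ^ 2 := by
  have hX0 : 0 ≤ X := (abs_nonneg _).trans (hX 0)
  have hKB := norm_cutoffKernel_le hX lam
  obtain ⟨v, hv, hvu, hconv⟩ := exists_memLp_enorm_circleConv_cutoffKernel_le hχ lam hu
  have hcont : Continuous (circleConv (cutoffKernel χ lam) v) :=
    continuous_circleConv (measurable_cutoffKernel hχ lam) hKB (ae_continuousAt_cutoffKernel hχ lam)
      (hv.integrable one_le_two)
  refine ⟨fun θ => ‖circleConv (cutoffKernel χ lam) v θ‖ₑ ^ 2,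
    (ENNReal.continuous_pow 2).comp hcont.enorm, fun θ => pow_le_pow_left' (hconv θ) 2,
    fun θ => ?_, ?_⟩
  · have hsq : (ENNReal.ofReal (2 * π) ^ (1 / 2 : ℝ)) ^ 2 = ENNReal.ofReal (2 * π) := by
      rw [← ENNReal.rpow_two, ← ENNReal.rpow_mul]; norm_num
    calc _ ≤ (ENNReal.ofReal (X * π) * (eLpNorm u 2 circleMeasure *
          ENNReal.ofReal (2 * π) ^ (1 / 2 : ℝ))) ^ 2 :=
          pow_le_pow_left' ((enorm_circleConv_le hKB hv.1 θ).trans (by gcongr)) 2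
      _ = _ := by
        rw [mul_pow, mul_pow, hsq, ENNReal.ofReal_mul (by positivity : 0 ≤ (X * π) ^ 2),
          ENNReal.ofReal_pow (by positivity)]
        ring
  · calc _ = eLpNorm (circleConv (cutoffKernel χ lam) v) 2 circleMeasure ^ 2 :=
          (eLpNorm_two_sq_eq_lintegral _ _).symm
      _ ≤ (ENNReal.ofReal (angularConst X η / √lam) * eLpNorm u 2 circleMeasure) ^ 2 := by
        gcongr
        exact (eLpNorm_circleConv_cutoffKernel_le hχ hX hη hχη hlam hv).trans (by gcongr)
      _ = _ := by
        have hconst : 0 < angularConst X η := angularConst_pos hX0 η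
        rw [mul_pow, ← ENNReal.ofReal_pow (by positivity), div_pow, sq_sqrt hlam.le]

end

/-- The factor of the kernel `H` that depends on the radii only. -/
def amplitude (δ : ℝ) (a : ℝ → ℂ) (β : ℝ → ℝ) (j : ℕ) (r₁ r₂ : ℝ) : ℂ :=
  (((2 : ℝ) ^ (-(j : ℝ) * (3 / 2 + δ)) : ℝ) : ℂ) * ((β (r₁ + r₂) : ℝ) : ℂ) *
    ((((r₁ + r₂) ^ (-(3 / 2 + δ)) : ℝ) : ℂ) * a ((2 : ℝ) ^ (j : ℝ) * (r₁ + r₂)))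

/-- The coefficient of `s²` in the phase of the kernel `H`. -/
def frequency (j : ℕ) (r₁ r₂ : ℝ) : ℝ := (2 : ℝ) ^ (j : ℝ) * (r₁ * r₂ / (r₁ + r₂))

lemma psi3m_eq_mul_conjPoisson (δ : ℝ) (a : ℝ → ℂ) (j : ℕ) (r₁ r₂ φ s : ℝ) :
    psi3m δ a j r₁ r₂ φ s = (((r₁ + r₂) ^ (-(3 / 2 + δ)) : ℝ) : ℂ) *
      a ((2 : ℝ) ^ (j : ℝ) * (r₁ + r₂)) * (conjPoisson φ s : ℂ) := by
  rw [psi3m, conjPoisson, bb, mul_pow, sq_sqrt zero_le_two, sin_add_pi]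

/-- The square of the `L²(ℝ²)` norm of a function written in polar coordinates. -/
def polarEnergy (f : ℝ → ℝ → ℂ) : ℝ≥0∞ :=
  ∫⁻ r in Ioi (0 : ℝ), eLpNorm (f r) 2 circleMeasure ^ 2 * ENNReal.ofReal r

section

variable {δ : ℝ} {a : ℝ → ℂ} {β χ : ℝ → ℝ} {j : ℕ} {f : ℝ → ℝ → ℂ} {r₁ r₂ c R D X η : ℝ}

lemma Hker_eq_amplitude_mul_oscKernel (δ : ℝ) (a : ℝ → ℂ) (β : ℝ → ℝ) (j : ℕ) (r₁ r₂ φ : ℝ) :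
    Hker δ a β j r₁ r₂ φ = amplitude δ a β j r₁ r₂ * oscKernel (frequency j r₁ r₂) φ := by
  simp only [Hker, amplitude, oscKernel, frequency, psi3m_eq_mul_conjPoisson]
  rw [mul_assoc (_ * _), ← integral_const_mul _ (fun s : ℝ => _ * (conjPoisson φ s : ℂ))]
  congr 2 with s
  ring

lemma TH_eq_integral_circleConv (δ : ℝ) (a : ℝ → ℂ) (β χ : ℝ → ℝ) (j : ℕ) (f : ℝ → ℝ → ℂ)
    (r₁ θ : ℝ) :
    TH δ a β χ j f r₁ θ = ∫ r in Ioi 0, amplitude δ a β j r₁ r * r *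
      circleConv (cutoffKernel χ (frequency j r₁ r)) (f r) θ := by
  rw [TH]
  congr 1 with r
  rw [circleConv, ← integral_const_mul, ← integral_mul_const]
  congr 1 with t
  rw [Hker_eq_amplitude_mul_oscKernel, cutoffKernel]
  ring

lemma add_mem_Icc_of_amplitude_ne_zero (hβ : Function.support β ⊆ Icc c R)
    (h : amplitude δ a β j r₁ r₂ ≠ 0) : r₁ + r₂ ∈ Icc c R :=
  hβ fun h0 => h (by rw [amplitude, h0, Complex.ofReal_zero, mul_zero, zero_mul])

lemma exists_norm_amplitude_le (δ : ℝ) (ha : ∃ M : ℝ, ∀ r > (0 : ℝ), ‖a r‖ ≤ M)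
    (hβ : ∃ M : ℝ, ∀ r, |β r| ≤ M) (hc : 0 < c) (hβs : Function.support β ⊆ Icc c R) :
    ∃ C : ℝ, 0 < C ∧
      ∀ j r₁ r₂, ‖amplitude δ a β j r₁ r₂‖ ≤ (2 : ℝ) ^ (-(j : ℝ) * (3 / 2 + δ)) * C := by
  obtain ⟨Ca, hCa⟩ := ha
  obtain ⟨Cβ, hCβ⟩ := hβ
  obtain ⟨Cr, hCr⟩ := isCompact_Icc.exists_bound_of_continuousOn
    (f := fun r : ℝ => r ^ (-(3 / 2 + δ))) (s := Icc c R)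
    (continuousOn_id.rpow_const fun r hr => .inl (hc.trans_le hr.1).ne')
  refine ⟨|Cβ * (Cr * Ca)| + 1, by positivity, fun j r₁ r₂ => ?_⟩
  by_cases h : amplitude δ a β j r₁ r₂ = 0
  · rw [h, norm_zero]; positivity
  have hmem := add_mem_Icc_of_amplitude_ne_zero hβs h
  have hpos : 0 < r₁ + r₂ := hc.trans_le hmem.1
  rw [amplitude, mul_assoc, norm_mul, Complex.norm_real, norm_of_nonneg (by positivity)]
  gcongr
  refine le_trans ?_ ((le_abs_self _).trans (le_add_of_nonneg_right zero_le_one))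
  have hβ_le := hCβ (r₁ + r₂)
  have hr_le := hCr _ hmem
  rw [norm_mul, norm_mul, Complex.norm_real, Complex.norm_real]
  exact mul_le_mul hβ_le (mul_le_mul hr_le (hCa _ (by positivity)) (norm_nonneg _)
    ((norm_nonneg _).trans hr_le)) (by positivity) ((abs_nonneg _).trans hβ_le)

lemma frequency_pos (hr₁ : 0 < r₁) (hr₂ : 0 < r₂) : 0 < frequency j r₁ r₂ := by
  unfold frequency; positivity

section

variable (hβs : Function.support β ⊆ Icc c R) (hD : ∀ r₁ r₂, ‖amplitude δ a β j r₁ r₂‖ ≤ D)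

include hβs in
lemma amplitude_eq_zero_of_lt (h : R < r₁ + r₂) : amplitude δ a β j r₁ r₂ = 0 :=
  by_contra fun hne => h.not_ge (add_mem_Icc_of_amplitude_ne_zero hβs hne).2

include hβs in
lemma TH_eq_setIntegral_Ioc (hr₁ : 0 < r₁) (χ : ℝ → ℝ) (f : ℝ → ℝ → ℂ) (θ : ℝ) :
    TH δ a β χ j f r₁ θ = ∫ r in Ioc 0 R, amplitude δ a β j r₁ r * r *
      circleConv (cutoffKernel χ (frequency j r₁ r)) (f r) θ := by
  rw [TH_eq_integral_circleConv]
  refine setIntegral_eq_of_subset_of_forall_sdiff_eq_zero measurableSet_Ioi Ioc_subset_Ioi_self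
    fun r hr => ?_
  have hRr : R < r₁ + r := by
    have : R < r := lt_of_not_ge fun h => hr.2 ⟨hr.1, h⟩
    linarith
  rw [amplitude_eq_zero_of_lt hβs hRr, zero_mul, zero_mul]

include hβs in
lemma TH_eq_zero_of_lt (hr₁ : R < r₁) (χ : ℝ → ℝ) (f : ℝ → ℝ → ℂ) (θ : ℝ) :
    TH δ a β χ j f r₁ θ = 0 := by
  rw [TH_eq_integral_circleConv]
  refine setIntegral_eq_zero_of_forall_eq_zero fun r (hr : 0 < r) => ?_
  rw [amplitude_eq_zero_of_lt hβs (by linarith), zero_mul, zero_mul]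

include hβs hD

lemma norm_amplitude_sq_mul_add_le (hR : 0 ≤ R) (r₁ r₂ : ℝ) :
    ‖amplitude δ a β j r₁ r₂‖ ^ 2 * (r₁ + r₂) ≤ D ^ 2 * R := by
  rcases lt_or_ge R (r₁ + r₂) with h | h
  · rw [amplitude_eq_zero_of_lt hβs h, norm_zero]
    nlinarith [mul_nonneg (sq_nonneg D) hR]
  · calc _ ≤ ‖amplitude δ a β j r₁ r₂‖ ^ 2 * R := by gcongr
      _ ≤ _ := by gcongr; exact hD r₁ r₂

lemma norm_amplitude_mul_sq_le (hR : 0 ≤ R) (hr₁ : 0 < r₁) (hr₂ : 0 < r₂) :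
    ‖amplitude δ a β j r₁ r₂ * r₂‖ ^ 2 ≤ D ^ 2 * R * r₂ := by
  rw [norm_mul, Complex.norm_real, norm_of_nonneg hr₂.le]
  calc _ = ‖amplitude δ a β j r₁ r₂‖ ^ 2 * r₂ * r₂ := by ring
    _ ≤ ‖amplitude δ a β j r₁ r₂‖ ^ 2 * (r₁ + r₂) * r₂ := by gcongr; linarith
    _ ≤ _ := by gcongr ?_ * _; exact norm_amplitude_sq_mul_add_le hβs hD hR r₁ r₂

lemma norm_amplitude_mul_sq_div_frequency_le (hR : 0 ≤ R) (hr₁ : 0 < r₁) (hr₂ : 0 < r₂) :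
    ‖amplitude δ a β j r₁ r₂ * r₂‖ ^ 2 / frequency j r₁ r₂ ≤
      D ^ 2 * R / ((2 : ℝ) ^ (j : ℝ) * r₁) * r₂ := by
  rw [norm_mul, Complex.norm_real, norm_of_nonneg hr₂.le, frequency]
  calc _ = ‖amplitude δ a β j r₁ r₂‖ ^ 2 * (r₁ + r₂) / ((2 : ℝ) ^ (j : ℝ) * r₁) * r₂ := by
        field_simp
    _ ≤ _ := by gcongr ?_ / _ * _; exact norm_amplitude_sq_mul_add_le hβs hD hR r₁ r₂

lemma exists_continuous_majorant_amplitude_mul (hR : 0 ≤ R) (hχ : Continuous χ)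
    (hX : ∀ φ, |χ (bb φ)| ≤ X) (hη : 0 < η) (hχη : ∀ x, |x| < η → χ x = 1) (hr₁ : 0 < r₁)
    (hr₂ : 0 < r₂) {u : ℝ → ℂ} (hu : eLpNorm u 2 circleMeasure ≠ ∞) :
    ∃ F : ℝ → ℝ≥0∞, Continuous F ∧
      (∀ θ, ‖amplitude δ a β j r₁ r₂ * r₂ *
        circleConv (cutoffKernel χ (frequency j r₁ r₂)) u θ‖ₑ ^ 2 ≤ F θ) ∧
      (∀ θ, F θ ≤ ENNReal.ofReal (D ^ 2 * R * ((X * π) ^ 2 * (2 * π))) *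
        (eLpNorm u 2 circleMeasure ^ 2 * ENNReal.ofReal r₂)) ∧
      ∫⁻ θ, F θ ∂circleMeasure ≤
        ENNReal.ofReal (D ^ 2 * R / ((2 : ℝ) ^ (j : ℝ) * r₁) * angularConst X η ^ 2) *
          (eLpNorm u 2 circleMeasure ^ 2 * ENNReal.ofReal r₂) := by
  obtain ⟨F, hF_cont, hF_ge, hF_le, hF_int⟩ :=
    exists_continuous_majorant_circleConv_cutoffKernel hχ hX hη hχη
      (frequency_pos (j := j) hr₁ hr₂) hu
  set A := amplitude δ a β j r₁ r₂ * r₂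
  have hscale {p q : ℝ} (hp : 0 ≤ p) (hpq : ‖A‖ ^ 2 * p ≤ q * r₂) {N : ℝ≥0∞} :
      ENNReal.ofReal (‖A‖ ^ 2) * (ENNReal.ofReal p * N) ≤
        ENNReal.ofReal q * (N * ENNReal.ofReal r₂) := by
    rw [← mul_assoc, ← ENNReal.ofReal_mul (sq_nonneg _), mul_comm N, ← mul_assoc,
      ← ENNReal.ofReal_mul' hr₂.le]
    gcongr
  refine ⟨fun θ => ENNReal.ofReal (‖A‖ ^ 2) * F θ,
    (ENNReal.continuous_const_mul ENNReal.ofReal_ne_top).comp hF_cont, fun θ => ?_, fun θ => ?_, ?_⟩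
  · rw [enorm_mul, mul_pow, ENNReal.ofReal_pow (norm_nonneg _), ofReal_norm]
    exact mul_le_mul' le_rfl (hF_ge θ)
  · refine (mul_le_mul' le_rfl (hF_le θ)).trans (hscale (by positivity) ?_)
    calc _ ≤ D ^ 2 * R * r₂ * ((X * π) ^ 2 * (2 * π)) := by
          gcongr; exact norm_amplitude_mul_sq_le hβs hD hR hr₁ hr₂
      _ = _ := by ring
  · rw [lintegral_const_mul' _ _ ENNReal.ofReal_ne_top]
    have hfreq : 0 < frequency j r₁ r₂ := frequency_pos hr₁ hr₂
    refine (mul_le_mul' le_rfl hF_int).trans (hscale (by positivity) ?_)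
    calc _ = ‖A‖ ^ 2 / frequency j r₁ r₂ * angularConst X η ^ 2 := by ring
      _ ≤ D ^ 2 * R / ((2 : ℝ) ^ (j : ℝ) * r₁) * r₂ * angularConst X η ^ 2 := by
          gcongr; exact norm_amplitude_mul_sq_div_frequency_le hβs hD hR hr₁ hr₂
      _ = _ := by ring

end

lemma polarLp_two_eq (f : ℝ → ℝ → ℂ) : polarLp 2 f = polarEnergy f ^ (1 / 2 : ℝ) := by
  simp only [polarLp, polarEnergy, eLpNorm_two_sq_eq_lintegral, ENNReal.rpow_two, enorm_eq_nnnorm]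

section

variable (hβs : Function.support β ⊆ Icc c R)
    (hD : ∀ r₁ r₂, ‖amplitude δ a β j r₁ r₂‖ ≤ D) (hD0 : 0 < D) (hR : 0 < R) (hχ : Continuous χ)
    (hX : ∀ φ, |χ (bb φ)| ≤ X) (hη : 0 < η) (hχη : ∀ x, |x| < η → χ x = 1)

include hβs hD hD0 hR hχ hX hη hχη

lemma lintegral_enorm_TH_sq_le (hf : polarEnergy f ≠ ∞) (hr₁ : 0 < r₁) :
    ∫⁻ θ, ‖TH δ a β χ j f r₁ θ‖ₑ ^ 2 ∂circleMeasure ≤ ENNReal.ofReal R *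
      (ENNReal.ofReal (D ^ 2 * R / ((2 : ℝ) ^ (j : ℝ) * r₁) * angularConst X η ^ 2) *
        polarEnergy f) := by
  have hX0 : 0 ≤ X := (abs_nonneg _).trans (hX 0)
  have hconst : 0 < angularConst X η := angularConst_pos hX0 η
  set A : ℝ≥0∞ :=
    ENNReal.ofReal (D ^ 2 * R / ((2 : ℝ) ^ (j : ℝ) * r₁) * angularConst X η ^ 2)
  have hA : A ≠ 0 := (ENNReal.ofReal_pos.2 (by positivity)).ne'
  have hA_top : A ≠ ∞ := ENNReal.ofReal_ne_top
  set μ : Measure ℝ := volume.restrict (Ioc 0 R)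
  set N : ℝ → ℝ≥0∞ := fun r => eLpNorm (f r) 2 circleMeasure ^ 2 * ENNReal.ofReal r with hN
  have hM : ∫⁻ r, A * N r ∂μ ≤ A * polarEnergy f := by
    rw [lintegral_const_mul' _ _ hA_top]
    exact mul_le_mul' le_rfl (lintegral_mono_set Ioc_subset_Ioi_self)
  have hμ : μ univ = ENNReal.ofReal R := by simp [μ]
  simp only [TH_eq_setIntegral_Ioc hβs hr₁]
  rw [← hμ]
  refine (lintegral_enorm_integral_sq_le (M := fun r => A * N r)
    (B := ENNReal.ofReal (D ^ 2 * R * ((X * π) ^ 2 * (2 * π))) / A)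
    (ENNReal.div_ne_top ENNReal.ofReal_ne_top hA)
    (ne_top_of_le_ne_top (ENNReal.mul_ne_top hA_top hf) hM) ?_).trans (mul_le_mul' le_rfl hM)
  filter_upwards [ae_restrict_mem measurableSet_Ioc] with r hr hMr
  have hfr : eLpNorm (f r) 2 circleMeasure ≠ ∞ := fun h => hMr (by simp [hN, h, hA, hr.1])
  simp only [← mul_assoc _ A, ENNReal.div_mul_cancel hA hA_top]
  exact exists_continuous_majorant_amplitude_mul hβs hD hR.le hχ hX hη hχη hr₁ hr.1 hfr

lemma polarEnergy_TH_le (hf : polarEnergy f ≠ ∞) :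
    polarEnergy (TH δ a β χ j f) ≤
      ENNReal.ofReal (R ^ 3 * (D * angularConst X η) ^ 2 / (2 : ℝ) ^ (j : ℝ)) * polarEnergy f := by
  set A : ℝ := D ^ 2 * R * angularConst X η ^ 2 / (2 : ℝ) ^ (j : ℝ)
  set T : ℝ → ℝ≥0∞ := fun r =>
    eLpNorm (TH δ a β χ j f r) 2 circleMeasure ^ 2 * ENNReal.ofReal r with hT
  have hfar : ∫⁻ r in Ioi R, T r = 0 :=
    setLIntegral_eq_zero measurableSet_Ioi fun r (hr : R < r) => by
      simp [hT, eLpNorm_two_sq_eq_lintegral, TH_eq_zero_of_lt hβs hr]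
  have hnear : ∀ r ∈ Ioc 0 R, T r ≤
      ENNReal.ofReal R * (ENNReal.ofReal A * polarEnergy f) := fun r hr => by
    simp only [hT]
    have hr0 : 0 < r := hr.1
    have hA : A = D ^ 2 * R / ((2 : ℝ) ^ (j : ℝ) * r) * angularConst X η ^ 2 * r := by
      simp only [A]; field_simp
    rw [hA, ENNReal.ofReal_mul' hr0.le, mul_right_comm, ← mul_assoc, eLpNorm_two_sq_eq_lintegral]
    gcongr
    exact lintegral_enorm_TH_sq_le hβs hD hD0 hR hχ hX hη hχη hf hr0
  calc polarEnergy (TH δ a β χ j f)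
      ≤ (∫⁻ r in Ioc 0 R, T r) + 0 := by
        rw [polarEnergy, ← Ioc_union_Ioi_eq_Ioi hR.le, ← hfar]
        exact lintegral_union_le _ _ _
    _ ≤ ∫⁻ _ in Ioc 0 R, ENNReal.ofReal R * (ENNReal.ofReal A * polarEnergy f) := by
        rw [add_zero]
        exact setLIntegral_mono' measurableSet_Ioc hnear
    _ = ENNReal.ofReal (R * A * R) * polarEnergy f := by
        rw [setLIntegral_const, volume_Ioc, sub_zero, ENNReal.ofReal_mul' hR.le,
          ENNReal.ofReal_mul hR.le]
        ring
    _ = _ := by congr 2; simp only [A]; ring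

lemma polarLp_two_TH_le (f : ℝ → ℝ → ℂ) :
    polarLp 2 (TH δ a β χ j f) ≤
      ENNReal.ofReal (√(R ^ 3) * (D * angularConst X η) * (2 : ℝ) ^ (-(j : ℝ) / 2)) *
        polarLp 2 f := by
  have hX0 : 0 ≤ X := (abs_nonneg _).trans (hX 0)
  have hconst : 0 < angularConst X η := angularConst_pos hX0 η
  rw [polarLp_two_eq, polarLp_two_eq]
  rcases eq_or_ne (polarEnergy f) ∞ with hf | hf
  · rw [hf, ENNReal.top_rpow_of_pos one_half_pos, ENNReal.mul_top]
    · exact le_top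
    · exact (ENNReal.ofReal_pos.2 (by positivity)).ne'
  have hpow : ((2 : ℝ) ^ (-(j : ℝ) / 2)) ^ 2 = ((2 : ℝ) ^ (j : ℝ))⁻¹ := by
    rw [← rpow_mul_natCast zero_le_two, ← rpow_neg zero_le_two]; norm_num
  have hsq : R ^ 3 * (D * angularConst X η) ^ 2 / (2 : ℝ) ^ (j : ℝ) =
      (√(R ^ 3) * (D * angularConst X η) * (2 : ℝ) ^ (-(j : ℝ) / 2)) ^ 2 := by
    rw [mul_pow (_ * _), mul_pow √_, hpow, sq_sqrt (by positivity), div_eq_mul_inv]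
  refine (ENNReal.rpow_le_rpow (polarEnergy_TH_le hβs hD hD0 hR hχ hX hη hχη hf)
    one_half_pos.le).trans_eq ?_
  rw [hsq, ENNReal.mul_rpow_of_nonneg _ _ one_half_pos.le, ENNReal.ofReal_pow (by positivity),
    ← ENNReal.rpow_two, ← ENNReal.rpow_mul]
  norm_num

end

end

lemma two_rpow_eq_ofReal (x : ℝ) : (2 : ℝ≥0∞) ^ x = ENNReal.ofReal ((2 : ℝ) ^ x) := by
  rw [← ENNReal.ofReal_rpow_of_pos zero_lt_two, ENNReal.ofReal_ofNat]

theorem stmt12_general (δ : ℝ) {a : ℝ → ℂ} (ha : ∃ M : ℝ, ∀ r > (0 : ℝ), ‖a r‖ ≤ M) {β : ℝ → ℝ}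
    (hβ : ∃ M : ℝ, ∀ r, |β r| ≤ M) {c R : ℝ} (hc : 0 < c) (hβs : Function.support β ⊆ Icc c R)
    {χ : ℝ → ℝ} (hχ : Continuous χ) (hχ1 : ∀ᶠ x in 𝓝 0, χ x = 1) :
    ∃ C : ℝ≥0, ∀ (j : ℕ) (f : ℝ → ℝ → ℂ),
      polarLp 2 (TH δ a β χ j f) ≤
        (C : ℝ≥0∞) * (2 : ℝ≥0∞) ^ (-(j : ℝ) * (3 / 2 + δ)) *
          (2 : ℝ≥0∞) ^ (-(j : ℝ) / 2) * polarLp 2 f := by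
  replace hβs := hβs.trans (Icc_subset_Icc_right (le_max_right c R))
  have hR : 0 < max c R := lt_max_of_lt_left hc
  obtain ⟨C₁, hC₁, hamp⟩ := exists_norm_amplitude_le δ ha hβ hc hβs
  obtain ⟨X, hX⟩ := isCompact_Icc.exists_bound_of_continuousOn (s := Icc (-√2) √2) hχ.continuousOn
  obtain ⟨η, hη, hχη⟩ := Metric.eventually_nhds_iff.1 hχ1
  refine ⟨(√(max c R ^ 3) * (C₁ * angularConst X η)).toNNReal, fun j f => ?_⟩
  refine (polarLp_two_TH_le hβs (hamp j) (by positivity) hR hχ (fun φ => hX _ (bb_mem_Icc φ)) hη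
    (fun x hx => hχη (by simpa using hx)) f).trans_eq ?_
  rw [two_rpow_eq_ofReal, two_rpow_eq_ofReal, ← ENNReal.ofReal,
    ← ENNReal.ofReal_mul' (by positivity), ← ENNReal.ofReal_mul' (by positivity)]
  congr 2
  ring

end

theorem stmt12 (δ : ℝ) (hδ : 0 ≤ δ) (a : ℝ → ℂ) (ha : IsSymbol0 a)
    (β : ℝ → ℝ) (hβ : ContDiff ℝ (⊤ : ℕ∞) β)
    (hβs : Function.support β ⊆ Set.Icc (3 / 8) (4 / 3)) :
    ∃ ε₀ : ℝ, 0 < ε₀ ∧ ∀ ε : ℝ, 0 < ε → ε ≤ ε₀ →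
      ∀ χ : ℝ → ℝ, ContDiff ℝ (⊤ : ℕ∞) χ → (∀ x, χ (-x) = χ x) →
        Function.support χ ⊆ Set.Icc (-ε) ε →
        (∀ x ∈ Set.Icc (-(ε / 2)) (ε / 2), χ x = 1) →
        ∃ C : ℝ≥0, ∀ (j : ℕ), 1 ≤ j → ∀ f : ℝ → ℝ → ℂ,
          polarLp 2 (TH δ a β χ j f) ≤
            (C : ℝ≥0∞) * (2 : ℝ≥0∞) ^ (-(j : ℝ) * (3 / 2 + δ)) *
              (2 : ℝ≥0∞) ^ (-(j : ℝ) / 2) * polarLp 2 f := by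
  have hβ_bdd : ∃ M : ℝ, ∀ r, |β r| ≤ M := hβ.continuous.bounded_above_of_compact_support
    (HasCompactSupport.of_support_subset_isCompact isCompact_Icc hβs)
  refine ⟨1, one_pos, fun ε hε _ χ hχ _ _ hχ1 => ?_⟩
  obtain ⟨C, hC⟩ := stmt12_general δ ha.2.1 hβ_bdd (by norm_num) hβs hχ.continuous
    (Filter.mem_of_superset (Icc_mem_nhds (by linarith) (by linarith)) hχ1)
  exact ⟨C, fun j _ => hC j⟩

end
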